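/- arXiv:2107.10610 — 2 statements merged into one kernel-verified Lean document; each statement's English description precedes it below -/
import Mathlib

section
/- Let t ≥ 2 be an integer and let T be a tree on at least three vertices that is not nice. Then there exists a constant C > 0 such that for all n ≥ 1, ex(n,T,K_{2,t}) ≤ C·n^{|L| + (|A|+s)/2}, where L is the set of leaves of T, A is the set from the final partition (A,B) of T, and s is the number of connected components of the forest obtained from T by deleting all vertices of B that are not leaves of T. -/
/-!
Call `D ⊆ V(T)` *determining* if every set `S` with `D ⊆ S ≠ V(T)` misses a vertex with two
neighbours in `S`. In a `K_{2,t}`-free graph two distinct vertices have at most `t` common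
neighbours, so once `D` is embedded the remaining vertices can be added one at a time with
at most `t` choices each. Hence there are `O(n ^ |D|)` embeddings of `T`
(`card_extensions_le`, `embCount_le`), and at least as many embeddings as copies.

A determining set is formed by the leaves `L` and the smaller of the two colour classes of `A`
in a proper 2-colouring of `T` (`leaves_union_class_determine`, `exists_determining_set`).
The non-leaf vertices of `B` induce a forest, so among those still missing one has at most one
missing neighbour in `B`; as it has at least three neighbours in `B`, two of them are present.
After all of `B` is present, a missing vertex of `A` has all its neighbours in `B` or in the
chosen colour class, and it has at least two neighbours because it is not a leaf.

This yields the exponent `|L| + |A|/2`, which is at most the claimed `|L| + (|A| + s)/2`.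
-/

open SimpleGraph Finset

/-- `G` contains a copy of `F`, i.e. `G` has a subgraph isomorphic to `F`. -/
def ContainsCopy {α β : Type*} (F : SimpleGraph α) (G : SimpleGraph β) : Prop :=
  ∃ f : α → β, Function.Injective f ∧ ∀ ⦃a b⦄, F.Adj a b → G.Adj (f a) (f b)

/-- `G` is `F`-free: it contains no subgraph isomorphic to `F`. -/
def IsFFree {α β : Type*} (F : SimpleGraph α) (G : SimpleGraph β) : Prop :=
  ¬ ContainsCopy F G

/-- `𝒩(H,G)`: the number of subgraphs of `G` isomorphic to `H`. -/
noncomputable def copyCount {α β : Type*} (H : SimpleGraph α) (G : SimpleGraph β) : ℕ :=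
  Nat.card {G' : G.Subgraph // Nonempty (G'.coe ≃g H)}

/-- The number of embeddings of `H` into `G` (injective, edge-preserving maps). -/
noncomputable def embCount {α β : Type*} (H : SimpleGraph α) (G : SimpleGraph β) : ℕ :=
  Nat.card {f : α → β // Function.Injective f ∧ ∀ ⦃a b⦄, H.Adj a b → G.Adj (f a) (f b)}

/-- `ex(n,H,F)`: the maximum number of copies of `H` in an `F`-free graph on `n` vertices. -/
noncomputable def exNum {α β : Type*} (n : ℕ) (H : SimpleGraph α) (F : SimpleGraph β) : ℕ :=
  sSup {k | ∃ G : SimpleGraph (Fin n), IsFFree F G ∧ copyCount H G = k}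

/-- The defining relation of `K_{2,r}^{p,q}`: the two vertices `u = inl 0`, `v = inl 1` of the
small side, `r` vertices joined to both, `p` vertices joined only to `u`, `q` vertices joined
only to `v`. -/
def K2rpqRel (p q r : ℕ) :
    (Fin 2 ⊕ (Fin r ⊕ Fin p ⊕ Fin q)) → (Fin 2 ⊕ (Fin r ⊕ Fin p ⊕ Fin q)) → Prop
  | Sum.inl _, Sum.inr (Sum.inl _) => True
  | Sum.inl i, Sum.inr (Sum.inr (Sum.inl _)) => i = 0
  | Sum.inl i, Sum.inr (Sum.inr (Sum.inr _)) => i = 1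
  | _, _ => False

/-- The graph `K_{2,r}^{p,q}` obtained from `K_{2,r}` by adding `p` pendant vertices at `u`
and `q` pendant vertices at `v`, where `u,v` form the side of size 2. -/
def K2rpq (p q r : ℕ) : SimpleGraph (Fin 2 ⊕ (Fin r ⊕ Fin p ⊕ Fin q)) :=
  SimpleGraph.fromRel (K2rpqRel p q r)

/-- The final set `B` of the greedy partition process: start with `B` the set of vertices of
degree `≠ 2`, and repeatedly move to `A` any non-leaf vertex of `B` with at most two neighbors
in `B`.  The result is the largest subset `S` of the initial `B` in which every non-leaf vertex
has at least three neighbors inside `S`. -/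
def finalB {V : Type*} [Fintype V] (T : SimpleGraph V) [DecidableRel T.Adj] : Set V :=
  {v | ∃ S : Set V, v ∈ S ∧ (∀ u ∈ S, T.degree u ≠ 2) ∧
    (∀ u ∈ S, T.degree u ≠ 1 → 3 ≤ Nat.card {w : V // w ∈ S ∧ T.Adj u w})}

/-- A tree is nice if it has at least 3 vertices and every vertex of the final set `B` is a
leaf. -/
def IsNice {V : Type*} [Fintype V] (T : SimpleGraph V) [DecidableRel T.Adj] : Prop :=
  3 ≤ Fintype.card V ∧ ∀ v ∈ finalB T, T.degree v = 1

/-- The graph on `Fin n` consisting of `⌊n/m⌋` pairwise disjoint copies of `K_m`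
(on consecutive blocks of `m` vertices) together with `n - m⌊n/m⌋` isolated vertices. -/
def cliqueBlocks (n m : ℕ) : SimpleGraph (Fin n) :=
  SimpleGraph.fromRel (fun a b =>
    (a : ℕ) / m = (b : ℕ) / m ∧ (a : ℕ) < m * (n / m) ∧ (b : ℕ) < m * (n / m))

/-! ### Counting embeddings into a `K_{2,t}`-free graph -/

lemma card_common_le {n t : ℕ} {G : SimpleGraph (Fin n)}
    (hG : IsFFree (completeBipartiteGraph (Fin 2) (Fin t)) G) {x y : Fin n} (hxy : x ≠ y)
    (s : Finset (Fin n)) (hs : ∀ w ∈ s, G.Adj x w ∧ G.Adj y w) : #s ≤ t := by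
  by_contra! hlt
  apply hG
  obtain ⟨e⟩ : Nonempty (Fin t ↪ s) := by
    apply Function.Embedding.nonempty_of_card_le
    simpa using hlt.le
  have hx : ∀ i, G.Adj x (e i) := fun i => (hs _ (e i).2).1
  have hy : ∀ i, G.Adj y (e i) := fun i => (hs _ (e i).2).2
  have hxe : ∀ i (j : Fin t), G.Adj ((![x, y] : Fin 2 → Fin n) i) (e j) := by
    intro i j
    fin_cases i
    · exact hx j
    · exact hy j
  refine ⟨Sum.elim ![x, y] (fun i => (e i : Fin n)), ?_, ?_⟩
  · refine Function.Injective.sumElim ?_ ?_ (fun i j => (hxe i j).ne)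
    · intro i j hij
      fin_cases i <;> fin_cases j <;> simp_all [eq_comm]
    · exact Subtype.val_injective.comp e.injective
  · rintro (i | i) (j | j) hij
    · simp at hij
    · exact hxe i j
    · exact (hxe j i).symm
    · simp at hij

/-- If at least two neighbours of `v` lie in `S`, an embedding into a `K_{2,t}`-free graph that is
prescribed on `S` leaves at most `t` choices for the image of `v`. Adding such vertices one after
another bounds the number of extensions of a prescribed map. -/
lemma card_extensions_le {V : Type*} [Fintype V] [DecidableEq V] {T : SimpleGraph V} {n t : ℕ}
    {G : SimpleGraph (Fin n)} (hG : IsFFree (completeBipartiteGraph (Fin 2) (Fin t)) G)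
    (D : Finset V)
    (hD : ∀ S : Finset V, D ⊆ S → S ≠ univ →
      ∃ v ∉ S, ∃ a ∈ S, ∃ b ∈ S, a ≠ b ∧ T.Adj v a ∧ T.Adj v b)
    (k : ℕ) (S : Finset V) (hDS : D ⊆ S) (hk : #Sᶜ = k) (E : Finset (V → Fin n))
    (hE : ∀ f ∈ E, Function.Injective f ∧ ∀ ⦃a b⦄, T.Adj a b → G.Adj (f a) (f b))
    (hES : ∀ f ∈ E, ∀ g ∈ E, ∀ v ∈ S, f v = g v) : #E ≤ t ^ k := by
  induction k generalizing S E with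
  | zero =>
    have hS : S = univ := by simpa using hk
    rw [pow_zero, Finset.card_le_one]
    intro f hf g hg
    funext v
    exact hES f hf g hg v (by simp [hS])
  | succ k ih =>
    have hS : S ≠ univ := by rintro rfl; simp at hk
    obtain ⟨v, hv, a, ha, b, hb, hab, hva, hvb⟩ := hD S hDS hS
    rcases E.eq_empty_or_nonempty with rfl | ⟨f₀, hf₀⟩
    · simp
    have himg : #(E.image fun f => f v) ≤ t := by
      apply card_common_le hG ((hE f₀ hf₀).1.ne hab)
      intro w hw
      obtain ⟨f, hf, rfl⟩ := Finset.mem_image.1 hw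
      rw [hES f₀ hf₀ f hf a ha, hES f₀ hf₀ f hf b hb]
      exact ⟨(hE f hf).2 hva.symm, (hE f hf).2 hvb.symm⟩
    have hfib : #E ≤ t ^ k * #(E.image fun f => f v) := by
      apply Finset.card_le_mul_card_image
      intro w _
      apply ih (insert v S) (hDS.trans (Finset.subset_insert _ _))
      · rw [Finset.card_compl, Finset.card_insert_of_notMem hv]
        rw [Finset.card_compl] at hk
        omega
      · intro f hf
        exact hE f (Finset.mem_filter.1 hf).1
      · intro f hf g hg u hu
        rw [Finset.mem_filter] at hf hg
        rcases Finset.mem_insert.1 hu with rfl | hu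
        · exact hf.2.trans hg.2.symm
        · exact hES f hf.1 g hg.1 u hu
    calc #E ≤ t ^ k * #(E.image fun f => f v) := hfib
      _ ≤ t ^ k * t := by gcongr
      _ = t ^ (k + 1) := (pow_succ _ _).symm

lemma embCount_le {V : Type*} [Fintype V] [DecidableEq V] {T : SimpleGraph V} {n t : ℕ}
    {G : SimpleGraph (Fin n)} (hG : IsFFree (completeBipartiteGraph (Fin 2) (Fin t)) G)
    (D : Finset V)
    (hD : ∀ S : Finset V, D ⊆ S → S ≠ univ →
      ∃ v ∉ S, ∃ a ∈ S, ∃ b ∈ S, a ≠ b ∧ T.Adj v a ∧ T.Adj v b) :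
    embCount T G ≤ t ^ #Dᶜ * n ^ #D := by
  classical
  rw [embCount, Nat.card_eq_fintype_card, Fintype.card_subtype]
  refine (Finset.card_le_mul_card_image
    (f := fun (f : V → Fin n) (v : D) => f v) _ (t ^ #Dᶜ) ?_).trans ?_
  · intro g _
    apply card_extensions_le hG D hD _ D subset_rfl rfl
    · intro f hf
      simp only [Finset.mem_filter, Finset.mem_univ, true_and] at hf
      exact hf.1
    · intro f hf h hh v hv
      rw [Finset.mem_filter] at hf hh
      exact congrFun (hf.2.trans hh.2.symm) ⟨v, hv⟩
  · gcongr
    refine (Finset.card_le_univ _).trans ?_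
    simp

lemma copyCount_le_embCount {V W : Type*} [Finite V] [Finite W] (T : SimpleGraph V)
    (G : SimpleGraph W) : copyCount T G ≤ embCount T G := by
  unfold _root_.copyCount embCount
  have key : ∀ P : {G' : G.Subgraph // Nonempty (G'.coe ≃g T)}, ∃ f : V → W,
      (Function.Injective f ∧ ∀ ⦃a b⦄, T.Adj a b → G.Adj (f a) (f b)) ∧
      P.1.verts = Set.range f ∧
      ∀ x y, P.1.Adj x y ↔ ∃ a b, T.Adj a b ∧ f a = x ∧ f b = y := by
    rintro ⟨P, ⟨e⟩⟩
    refine ⟨fun v => (e.symm v : W), ⟨Subtype.val_injective.comp e.symm.injective, ?_⟩, ?_, ?_⟩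
    · intro a b hab
      exact P.adj_sub (e.symm.map_rel_iff.2 hab : P.coe.Adj _ _)
    · ext x
      constructor
      · intro hx
        exact ⟨e ⟨x, hx⟩, by simp⟩
      · rintro ⟨v, rfl⟩
        exact (e.symm v).2
    · intro x y
      constructor
      · intro h
        refine ⟨e ⟨x, P.edge_vert h⟩, e ⟨y, P.edge_vert h.symm⟩, ?_, by simp, by simp⟩
        exact e.map_rel_iff.2 (show P.coe.Adj _ _ from h)
      · rintro ⟨a, b, hab, rfl, rfl⟩
        exact (e.symm.map_rel_iff.2 hab : P.coe.Adj _ _)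
  choose F hF hv ha using key
  apply Nat.card_le_card_of_injective
    (fun P => (⟨F P, hF P⟩ : {f : V → W // Function.Injective f ∧
      ∀ ⦃a b⦄, T.Adj a b → G.Adj (f a) (f b)}))
  intro P Q hPQ
  have hFPQ : F P = F Q := congrArg Subtype.val hPQ
  apply Subtype.ext
  apply SimpleGraph.Subgraph.ext
  · rw [hv, hv, hFPQ]
  · funext x y
    rw [eq_iff_iff, ha, ha, hFPQ]

/-! ### Structure of the tree -/

/-- Every nonempty vertex set of a tree has a member with at most one neighbour in the set: a
member at maximal distance from a fixed root, since all but one of its neighbours are farther. -/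
lemma exists_unique_neighbor {V : Type*} {T : SimpleGraph V} (hT : T.IsTree)
    (U : Finset V) (hU : U.Nonempty) :
    ∃ u ∈ U, ∀ a ∈ U, ∀ b ∈ U, T.Adj u a → T.Adj u b → a = b := by
  obtain ⟨r, -⟩ := id hU
  obtain ⟨u, hu, hmax⟩ := U.exists_max_image (fun v => T.dist r v) hU
  refine ⟨u, hu, fun a ha b hb hua hub => ?_⟩
  have key : ∀ c ∈ U, T.Adj u c → ∃ p : T.Walk r u, p.IsPath ∧ p.penultimate = c := by
    intro c hc huc
    obtain ⟨p, hp⟩ := (hT.connected r c).exists_walk_length_eq_dist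
    refine ⟨p.concat huc.symm, ?_, by simp⟩
    apply SimpleGraph.Walk.isPath_of_length_eq_dist
    have := hmax c hc
    rcases hT.dist_eq_dist_add_one_of_adj r huc with h | h <;>
      simp only [SimpleGraph.Walk.length_concat] <;> omega
  obtain ⟨p, hp, rfl⟩ := key a ha hua
  obtain ⟨q, hq, rfl⟩ := key b hb hub
  rw [(hT.existsUnique_path r u).unique hp hq]

/-- A member `v` of the final set `B` that is not a leaf has three neighbours in `B`. -/
lemma three_le_of_mem_finalB {V : Type*} [Fintype V] [DecidableEq V] (T : SimpleGraph V)
    [DecidableRel T.Adj] {v : V} (hv : v ∈ finalB T) (hd : T.degree v ≠ 1) :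
    ∃ N : Finset V, 3 ≤ #N ∧ ∀ w ∈ N, w ∈ finalB T ∧ T.Adj v w := by
  classical
  obtain ⟨S, hvS, h2, h3⟩ := hv
  refine ⟨univ.filter fun w => w ∈ S ∧ T.Adj v w, ?_, ?_⟩
  · have := h3 v hvS hd
    rwa [Nat.card_eq_fintype_card, Fintype.card_subtype] at this
  · intro w hw
    simp only [Finset.mem_filter, Finset.mem_univ, true_and] at hw
    exact ⟨⟨S, hw.1, h2, h3⟩, hw.2⟩

lemma mem_finalB_of_leaf {V : Type*} [Fintype V] (T : SimpleGraph V)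
    [DecidableRel T.Adj] {v : V} (hv : T.degree v = 1) : v ∈ finalB T :=
  ⟨{v}, rfl, by rintro u rfl; omega, by rintro u rfl h; exact absurd hv h⟩

/-- The leaves together with the vertices of `A` in one colour class `c = i` determine all other
vertices, by repeatedly adding a vertex with two neighbours already present: first the non-leaf
vertices of `B`, which induce a forest and so can be peeled off, then the rest of `A`. -/
lemma leaves_union_class_determine {V : Type*} [Fintype V] [DecidableEq V] {T : SimpleGraph V}
    [DecidableRel T.Adj] (hT : T.IsTree) (hcard : 3 ≤ Fintype.card V) (c : T.Coloring (Fin 2))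
    (i : Fin 2) (S : Finset V) (hL : ∀ v, T.degree v = 1 → v ∈ S)
    (hA : ∀ v, v ∉ finalB T → c v = i → v ∈ S) (hS : S ≠ univ) :
    ∃ v ∉ S, ∃ a ∈ S, ∃ b ∈ S, a ≠ b ∧ T.Adj v a ∧ T.Adj v b := by
  classical
  by_cases hU : (univ.filter fun v => v ∈ finalB T ∧ v ∉ S).Nonempty
  · obtain ⟨u, hu, huniq⟩ := exists_unique_neighbor hT _ hU
    simp only [Finset.mem_filter, Finset.mem_univ, true_and] at hu huniq
    obtain ⟨N, hN, hNB⟩ := three_le_of_mem_finalB T hu.1 (fun h => hu.2 (hL u h))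
    have h1 : #(N.filter fun w => w ∉ S) ≤ 1 := by
      rw [Finset.card_le_one]
      intro a ha b hb
      rw [Finset.mem_filter] at ha hb
      exact huniq a ⟨(hNB a ha.1).1, ha.2⟩ b ⟨(hNB b hb.1).1, hb.2⟩
        (hNB a ha.1).2 (hNB b hb.1).2
    have h2 : 1 < #(N.filter fun w => w ∈ S) := by
      have := Finset.card_filter_add_card_filter_not (s := N) (fun w => w ∈ S)
      omega
    obtain ⟨a, ha, b, hb, hab⟩ := Finset.one_lt_card.1 h2
    rw [Finset.mem_filter] at ha hb
    exact ⟨u, hu.2, a, ha.2, b, hb.2, hab, (hNB a ha.1).2, (hNB b hb.1).2⟩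
  · have hBS : ∀ v ∈ finalB T, v ∈ S := by
      intro v hv
      by_contra h
      exact hU ⟨v, by simp [hv, h]⟩
    obtain ⟨v, hv⟩ : ∃ v, v ∉ S := by
      by_contra! h
      exact hS (Finset.eq_univ_iff_forall.2 h)
    have hvA : v ∉ finalB T := fun h => hv (hBS v h)
    have hvi : c v ≠ i := fun h => hv (hA v hvA h)
    have hnbr : ∀ w, T.Adj v w → w ∈ S := by
      intro w hw
      by_cases hwB : w ∈ finalB T
      · exact hBS w hwB
      · have := c.valid hw
        exact hA w hwB (by omega)
    have hdeg : 1 < #(T.neighborFinset v) := by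
      rw [SimpleGraph.card_neighborFinset_eq_degree]
      have : Nontrivial V := Fintype.one_lt_card_iff_nontrivial.1 (by omega)
      have h0 := hT.connected.preconnected.degree_pos_of_nontrivial v
      have h1 : T.degree v ≠ 1 := fun h => hv (hL v h)
      omega
    obtain ⟨a, ha, b, hb, hab⟩ := Finset.one_lt_card.1 hdeg
    rw [SimpleGraph.mem_neighborFinset] at ha hb
    exact ⟨v, hv, a, hnbr a ha, b, hnbr b hb, hab, ha, hb⟩

/-- Taking the smaller colour class of `A` gives a determining set with at most `|L| + |A|/2`
vertices. -/
lemma exists_determining_set {V : Type*} [Fintype V] [DecidableEq V] {T : SimpleGraph V}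
    [DecidableRel T.Adj] (hT : T.IsTree) (hcard : 3 ≤ Fintype.card V) :
    ∃ D : Finset V,
      2 * #D ≤ 2 * Nat.card {v : V // T.degree v = 1} + Nat.card {v : V // v ∉ finalB T} ∧
      ∀ S : Finset V, D ⊆ S → S ≠ univ →
        ∃ v ∉ S, ∃ a ∈ S, ∃ b ∈ S, a ≠ b ∧ T.Adj v a ∧ T.Adj v b := by
  classical
  obtain ⟨c⟩ := hT.colorable_two
  set A : Finset V := univ.filter fun v => v ∉ finalB T with hAdef
  set L : Finset V := univ.filter fun v => T.degree v = 1 with hLdef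
  have hAc : Nat.card {v : V // v ∉ finalB T} = #A := by
    rw [Nat.card_eq_fintype_card, Fintype.card_subtype]
  have hLc : Nat.card {v : V // T.degree v = 1} = #L := by
    rw [Nat.card_eq_fintype_card, Fintype.card_subtype]
  rw [hAc, hLc]
  obtain ⟨i, hi⟩ : ∃ i : Fin 2, 2 * #(A.filter fun v => c v = i) ≤ #A := by
    have h := Finset.card_filter_add_card_filter_not (s := A) (fun v => c v = 0)
    have h' : (A.filter fun v => ¬ c v = 0) = A.filter fun v => c v = 1 := by
      apply Finset.filter_congr
      intro v _
      omega
    rw [h'] at h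
    by_cases h0 : 2 * #(A.filter fun v => c v = 0) ≤ #A
    · exact ⟨0, h0⟩
    · exact ⟨1, by omega⟩
  refine ⟨L ∪ A.filter fun v => c v = i, ?_, ?_⟩
  · have := Finset.card_union_le L (A.filter fun v => c v = i)
    omega
  · intro S hDS hS
    apply leaves_union_class_determine hT hcard c i S _ _ hS
    · intro v hv
      exact hDS (Finset.mem_union_left _ (by simp [hLdef, hv]))
    · intro v hv hc
      exact hDS (Finset.mem_union_right _ (by simp [hAdef, hv, hc]))

/-! ### The bound -/

theorem stmt2 {V : Type*} [Fintype V] [DecidableEq V]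
    (T : SimpleGraph V) [DecidableRel T.Adj]
    (t : ℕ) (ht : 2 ≤ t) (hT : T.IsTree) (hcard : 3 ≤ Fintype.card V)
    (hnot : ¬ IsNice T) :
    ∃ C : ℝ, 0 < C ∧ ∀ n : ℕ, 1 ≤ n →
      (exNum n T (completeBipartiteGraph (Fin 2) (Fin t)) : ℝ) ≤
        C * (n : ℝ) ^
          ((Nat.card {v : V // T.degree v = 1} : ℝ) +
            ((Nat.card {v : V // v ∉ finalB T} : ℝ) +
              (Nat.card (SimpleGraph.ConnectedComponent
                (SimpleGraph.induce {v : V | v ∈ finalB T → T.degree v = 1} T)) : ℝ)) / 2) := by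
  classical
  obtain ⟨D, hDcard, hD⟩ := exists_determining_set hT hcard
  refine ⟨(t : ℝ) ^ #Dᶜ, by positivity, fun n hn => ?_⟩
  have hex : exNum n T (completeBipartiteGraph (Fin 2) (Fin t)) ≤ t ^ #Dᶜ * n ^ #D := by
    apply csSup_le'
    rintro k ⟨G, hG, rfl⟩
    exact (copyCount_le_embCount T G).trans (embCount_le hG D hD)
  refine (show (exNum n T (completeBipartiteGraph (Fin 2) (Fin t)) : ℝ) ≤
    (t : ℝ) ^ #Dᶜ * (n : ℝ) ^ #D by exact_mod_cast hex).trans ?_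
  gcongr
  rw [← Real.rpow_natCast]
  apply Real.rpow_le_rpow_of_exponent_le (by exact_mod_cast hn)
  have h2 : (2 * #D : ℝ) ≤ 2 * (Nat.card {v : V // T.degree v = 1} : ℝ) +
      (Nat.card {v : V // v ∉ finalB T} : ℝ) := by exact_mod_cast hDcard
  have hs : (0 : ℝ) ≤ (Nat.card (SimpleGraph.ConnectedComponent
      (SimpleGraph.induce {v : V | v ∈ finalB T → T.degree v = 1} T)) : ℝ) := Nat.cast_nonneg _
  linarith
end

section
/- Let t ≥ 3 and let p, q, r ≥ 0 be integers with r > t. Then ex(n, K_{2,t}, K_{2,r}^{p,q}) / (binom(n,2)·binom(r−1,t)) → 1 as n → ∞. -/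
/-!
Write `d(u, v)` for the number of common neighbours of `u` and `v`. Since `t ≥ 3`, a copy of
`K_{2,t}` determines its small side, so twice the number of copies in `G` is the sum of
`binom(d(u, v), t)` over ordered pairs `u ≠ v` (`two_mul_copyCount`).

Upper bound (`two_mul_exNum_le`). Put `D = r + p + q + 1`. If `u ≠ v` have degree at least `D` and
`d(u, v) ≥ r`, then `K_{2,r}^{p,q}` embeds greedily; it also embeds when `d(u, v) ≥ D`. So in a
`K_{2,r}^{p,q}`-free graph every `d(u, v)` is below `D`, and a pair with `d(u, v) ≥ r` contains a
vertex of degree below `D`, which shares two neighbours with at most `D ^ 3` vertices. All but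
`O(n)` pairs therefore contribute at most `binom(r - 1, t)`, and the others a bounded amount.

Lower bound (`le_two_mul_exNum_of_primePow`). Put `m = r - 1`. For a prime power `Q ≡ 1 (mod m)` let
`A` be the group of nonzero `m`-th powers of the field `F` with `Q` elements, and on `A × F` join
distinct `(a, b)` and `(x, y)` when `(b + y) ^ m = a * x`. Common neighbours of `(a, b)` and
`(a', b')` correspond to `m`-th roots `z = (b + y) / (b' + y)` of `a / a'`, so there are never more
than `m` of them, and exactly `m` for all but `O(Q)` choices of `(a', b')` given `(a, b)`. This
graph has `Q (Q - 1) / m` vertices and contains no `K_{2,r}`; isolated vertices are added to reach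
`n`.

It remains to find such a `Q` with `Q ^ 2 / (m n)` close to `1` and at most `1`, for every large
`n`; this is `exists_primePow_near`, a qualitative form of the prime number theorem in arithmetic
progressions. Let `Λ₁` be the von Mangoldt function restricted to the class `1` modulo `m`. Its
L-series minus `φ(m)⁻¹ / (s - 1)` is continuous on `Re s ≥ 1`. Testing against the Fejér kernel
`fejer T`, whose Fourier transform has compact support, and letting `s → 1`, the
Riemann–Lebesgue lemma shows that the smoothed sum of `Λ₁(n) / n` around `log n ≈ y` tends, as
`y → ∞`, to a positive limit that does not depend on `T`. A gap of fixed length in the logarithms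
of the prime powers `≡ 1 (mod m)` makes the smoothed sum of order `1 / T` times those with `T = 2`,
which is impossible for large `T` and `y`.
-/

open SimpleGraph Finset

/-! ### The Fejér kernel -/

/-- The triangle function of half-width `T`, used as a compactly supported weight. -/
noncomputable def tri (T t : ℝ) : ℝ := max (1 - |t| / T) 0

/-- The (unnormalised) Fejér kernel: the Fourier transform of the triangle function. -/
noncomputable def fejer (T v : ℝ) : ℝ := ∫ t, tri T t * Real.cos (t * v)

lemma tri_nonneg (T t : ℝ) : 0 ≤ tri T t := le_max_right _ _

lemma tri_continuous (T : ℝ) : Continuous (tri T) := by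
  unfold tri; fun_prop

lemma tri_support {T : ℝ} (hT : 0 < T) : Function.support (tri T) ⊆ Set.Ioc (-T) T := by
  intro t ht
  have h : 0 < 1 - |t| / T := by
    by_contra h
    exact ht (max_eq_right (not_lt.mp h))
  have h2 : |t| < T := by
    rw [sub_pos, div_lt_one hT] at h; exact h
  exact ⟨(abs_lt.mp h2).1, (abs_lt.mp h2).2.le⟩

lemma tri_integrable {T : ℝ} (hT : 0 < T) : MeasureTheory.Integrable (tri T) := by
  apply (tri_continuous T).integrable_of_hasCompactSupport
  exact HasCompactSupport.of_support_subset_isCompact isCompact_Icc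
    ((tri_support hT).trans Set.Ioc_subset_Icc_self)

lemma tri_integrable_ofReal {T : ℝ} (hT : 0 < T) :
    MeasureTheory.Integrable (fun t => (tri T t : ℂ)) := (tri_integrable hT).ofReal

lemma norm_exp_I_real (x : ℝ) : ‖Complex.exp (Complex.I * x)‖ = 1 := by
  rw [mul_comm]; exact Complex.norm_exp_ofReal_mul_I x

lemma tri_exp_integrable {T : ℝ} (hT : 0 < T) (v : ℝ) :
    MeasureTheory.Integrable (fun t : ℝ => (tri T t : ℂ) * Complex.exp (Complex.I * ((t * v : ℝ)))) := by
  refine (tri_integrable_ofReal hT).mul_bdd (c := 1) ?_ ?_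
  · exact Continuous.aestronglyMeasurable (by fun_prop)
  · exact Filter.Eventually.of_forall fun t => (norm_exp_I_real _).le

lemma integral_tri_exp {T : ℝ} (hT : 0 < T) (v : ℝ) :
    ∫ t : ℝ, (tri T t : ℂ) * Complex.exp (Complex.I * ((t * v : ℝ))) = fejer T v := by
  have h1 : ∫ t : ℝ, (tri T t : ℂ) * Complex.exp (Complex.I * ((t * v : ℝ)))
      = ∫ t : ℝ, (tri T t : ℂ) * Complex.exp (Complex.I * ((t * (-v) : ℝ))) := by
    rw [← MeasureTheory.integral_neg_eq_self]
    congr 1; ext t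
    simp [tri]
  have h2 : (2 : ℂ) * ∫ t : ℝ, (tri T t : ℂ) * Complex.exp (Complex.I * ((t * v : ℝ)))
      = 2 * fejer T v := by
    rw [two_mul]
    conv_lhs => rw [h1]
    conv_lhs => enter [1]; rw [← h1]
    rw [← MeasureTheory.integral_add (tri_exp_integrable hT v) (tri_exp_integrable hT (-v))]
    unfold fejer
    rw [← integral_complex_ofReal, ← MeasureTheory.integral_const_mul]
    congr 1; ext t
    push_cast
    rw [Complex.cos]
    ring_nf
  exact mul_left_cancel₀ two_ne_zero h2

lemma fejer_eq_interval {T : ℝ} (hT : 0 < T) (v : ℝ) :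
    fejer T v = 2 * ∫ t in (0 : ℝ)..T, (1 - t / T) * Real.cos (t * v) := by
  have hc : Continuous fun t => tri T t * Real.cos (t * v) := by
    have := tri_continuous T; fun_prop
  have h0 : fejer T v = ∫ t in (-T)..T, tri T t * Real.cos (t * v) := by
    symm
    apply intervalIntegral.integral_eq_integral_of_support_subset
    exact (Function.support_mul_subset_left _ _).trans (tri_support hT)
  have h1 : ∫ t in (-T)..0, tri T t * Real.cos (t * v) = ∫ t in (0 : ℝ)..T, tri T t * Real.cos (t * v) := by
    rw [← neg_zero, ← intervalIntegral.integral_comp_neg]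
    simp [tri]
  rw [h0, ← intervalIntegral.integral_add_adjacent_intervals (hc.intervalIntegrable _ 0)
    (hc.intervalIntegrable 0 _), h1, ← two_mul]
  congr 1
  apply intervalIntegral.integral_congr
  intro t ht
  rw [Set.uIcc_of_le hT.le] at ht
  simp only [tri]
  rw [abs_of_nonneg ht.1, max_eq_left]
  rw [sub_nonneg, div_le_one hT]; exact ht.2

lemma fejer_of_ne {T : ℝ} (hT : 0 < T) {v : ℝ} (hv : v ≠ 0) :
    fejer T v = 2 * (1 - Real.cos (T * v)) / (T * v ^ 2) := by
  rw [fejer_eq_interval hT]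
  have h : ∀ t ∈ Set.uIcc 0 T, HasDerivAt
      (fun t => (1 - t / T) * (Real.sin (t * v) / v) - Real.cos (t * v) / (T * v ^ 2))
      ((1 - t / T) * Real.cos (t * v)) t := by
    intro t _
    have e0 : HasDerivAt (fun t : ℝ => t * v) v t := by
      simpa using (hasDerivAt_id t).mul_const v
    have e1 := e0.sin
    have e2 := e0.cos
    have e3 : HasDerivAt (fun t : ℝ => 1 - t / T) (-(1 / T)) t := by
      simpa using ((hasDerivAt_id t).div_const T).const_sub 1
    convert! (e3.mul (e1.div_const v)).sub (e2.div_const (T * v ^ 2)) using 1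
    field_simp
    ring
  rw [intervalIntegral.integral_eq_sub_of_hasDerivAt h
    (Continuous.intervalIntegrable (by fun_prop) _ _)]
  simp
  field_simp
  ring

lemma fejer_zero {T : ℝ} (hT : 0 < T) : fejer T 0 = T := by
  rw [fejer_eq_interval hT]
  have h : ∀ t ∈ Set.uIcc 0 T, HasDerivAt (fun t : ℝ => t - t ^ 2 / (2 * T))
      ((1 - t / T) * Real.cos (t * 0)) t := by
    intro t _
    convert! (hasDerivAt_id t).sub (((hasDerivAt_id t).pow 2).div_const (2 * T)) using 1
    simp
    field_simp
  rw [intervalIntegral.integral_eq_sub_of_hasDerivAt h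
    (Continuous.intervalIntegrable (by fun_prop) _ _)]
  field_simp
  ring

lemma fejer_nonneg {T : ℝ} (hT : 0 < T) (v : ℝ) : 0 ≤ fejer T v := by
  rcases eq_or_ne v 0 with rfl | hv
  · rw [fejer_zero hT]; exact hT.le
  · rw [fejer_of_ne hT hv]
    have := Real.cos_le_one (T * v)
    have : 0 ≤ 1 - Real.cos (T * v) := by linarith
    positivity

lemma fejer_le {T : ℝ} (hT : 0 < T) (v : ℝ) : fejer T v ≤ (T + 4 / T) * (1 + v ^ 2)⁻¹ := by
  rw [← div_eq_mul_inv, le_div_iff₀ (by positivity)]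
  rcases eq_or_ne v 0 with rfl | hv
  · rw [fejer_zero hT]
    have : 0 < 4 / T := by positivity
    simp; linarith
  · have h1 : fejer T v * v ^ 2 ≤ 4 / T := by
      rw [fejer_of_ne hT hv]
      have := Real.neg_one_le_cos (T * v)
      have h3 : 2 * (1 - Real.cos (T * v)) / (T * v ^ 2) * v ^ 2 = 2 * (1 - Real.cos (T * v)) / T := by
        field_simp
      rw [h3]
      gcongr; linarith
    have h2 : fejer T v ≤ T := by
      rw [fejer_of_ne hT hv, div_le_iff₀ (by positivity)]
      have := Real.one_sub_sq_div_two_le_cos (x := T * v)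
      nlinarith
    linarith

lemma fejer_continuous {T : ℝ} (hT : 0 < T) : Continuous (fejer T) := by
  unfold fejer
  refine MeasureTheory.continuous_of_dominated (bound := tri T) ?_ ?_ (tri_integrable hT) ?_
  · intro v
    have := tri_continuous T
    exact Continuous.aestronglyMeasurable (by fun_prop)
  · intro v
    refine Filter.Eventually.of_forall fun t => ?_
    rw [norm_mul, Real.norm_of_nonneg (tri_nonneg _ _)]
    exact mul_le_of_le_one_right (tri_nonneg _ _) (Real.abs_cos_le_one _)
  · exact Filter.Eventually.of_forall fun t => by fun_prop

lemma fejer_integrable {T : ℝ} (hT : 0 < T) : MeasureTheory.Integrable (fejer T) := by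
  refine MeasureTheory.Integrable.mono' (integrable_inv_one_add_sq.const_mul (T + 4 / T))
    (fejer_continuous hT).aestronglyMeasurable (Filter.Eventually.of_forall fun v => ?_)
  rw [Real.norm_of_nonneg (fejer_nonneg hT v)]
  exact fejer_le hT v

lemma integral_fejer {T : ℝ} (hT : 0 < T) : ∫ v, fejer T v = ∫ v, fejer 1 v := by
  have h : ∀ v, fejer T v = T * fejer 1 (T * v) := by
    intro v
    rcases eq_or_ne v 0 with rfl | hv
    · rw [fejer_zero hT, mul_zero, fejer_zero one_pos, mul_one]
    · rw [fejer_of_ne hT hv, fejer_of_ne one_pos (mul_ne_zero hT.ne' hv)]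
      simp; field_simp
  simp_rw [h]
  rw [MeasureTheory.integral_const_mul, MeasureTheory.Measure.integral_comp_mul_left,
    abs_of_pos (inv_pos.mpr hT), smul_eq_mul, mul_inv_cancel_left₀ hT.ne']

lemma integral_fejer_pos : 0 < ∫ v, fejer 1 v := by
  refine MeasureTheory.integral_pos_of_integrable_nonneg_nonzero (fejer_continuous one_pos)
    (fejer_integrable one_pos) (fun v => fejer_nonneg one_pos v) (x := 0) ?_
  rw [fejer_zero one_pos]; exact one_ne_zero

/-- Away from the origin `fejer T` is at most `C / T` times the sum of two translates of `fejer 2`.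
A single translate would not do because of its zeros; those of the two translates are disjoint. -/
lemma fejer_compare {δ : ℝ} (hδ : 0 < δ) : ∃ C : ℝ, 0 < C ∧ ∀ T > 0, ∀ v : ℝ, δ ≤ |v| →
    fejer T v ≤ C / T * (fejer 2 v + fejer 2 (v + Real.pi / 2)) := by
  have hpi := Real.pi_pos
  set k := 1 + Real.pi / (2 * δ) with hk
  have hk0 : 0 < k := by positivity
  refine ⟨2 * k ^ 2, by positivity, fun T hT v hv => ?_⟩
  have hv0 : 0 < |v| := hδ.trans_le hv
  have hvne : v ≠ 0 := abs_pos.mp hv0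
  set M := |v| + Real.pi / 2 with hM
  have hM0 : 0 < M := by positivity
  have hMk : M ≤ k * |v| := by
    have : Real.pi / 2 ≤ Real.pi / (2 * δ) * |v| := by
      rw [div_mul_eq_mul_div, div_le_div_iff₀ (by positivity) (by positivity)]
      nlinarith
    rw [hM, hk]; linarith
  have h1 : fejer T v ≤ 4 / (T * v ^ 2) := by
    rw [fejer_of_ne hT hvne]
    have := Real.neg_one_le_cos (T * v)
    gcongr; linarith
  have h2 : 2 * Real.sin v ^ 2 / M ^ 2 ≤ fejer 2 v := by
    rw [fejer_of_ne two_pos hvne, Real.cos_two_mul, ← Real.sin_sq_add_cos_sq v]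
    have : 2 * (Real.sin v ^ 2 + Real.cos v ^ 2 - (2 * Real.cos v ^ 2 - (Real.sin v ^ 2 + Real.cos v ^ 2)))
      / (2 * v ^ 2) = 2 * Real.sin v ^ 2 / |v| ^ 2 := by
      rw [sq_abs]; field_simp; ring
    rw [this]
    gcongr
    rw [hM]; linarith
  have h3 : 2 * Real.cos v ^ 2 / M ^ 2 ≤ fejer 2 (v + Real.pi / 2) := by
    rcases eq_or_ne (v + Real.pi / 2) 0 with h0 | h0
    · have hcv : Real.cos v = 0 := by
        rw [show v = -(Real.pi / 2) by linarith, Real.cos_neg, Real.cos_pi_div_two]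
      rw [hcv]
      simpa using fejer_nonneg two_pos _
    · have h0' : 0 < |v + Real.pi / 2| := abs_pos.mpr h0
      rw [fejer_of_ne two_pos h0]
      have : 2 * (1 - Real.cos (2 * (v + Real.pi / 2))) / (2 * (v + Real.pi / 2) ^ 2)
        = 2 * Real.cos v ^ 2 / |v + Real.pi / 2| ^ 2 := by
        rw [Real.cos_two_mul, Real.cos_add_pi_div_two, sq_abs, neg_sq, Real.sin_sq]
        field_simp; ring
      rw [this]
      gcongr
      calc |v + Real.pi / 2| ≤ |v| + |Real.pi / 2| := abs_add_le _ _
        _ = M := by rw [abs_of_pos (by positivity : 0 < Real.pi / 2)]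
  have h4 : 2 / M ^ 2 ≤ fejer 2 v + fejer 2 (v + Real.pi / 2) := by
    have : 2 / M ^ 2 = 2 * Real.sin v ^ 2 / M ^ 2 + 2 * Real.cos v ^ 2 / M ^ 2 := by
      rw [← add_div, ← mul_add, Real.sin_sq_add_cos_sq, mul_one]
    linarith
  have h5 : 4 / (T * v ^ 2) ≤ 2 * k ^ 2 / T * (2 / M ^ 2) := by
    rw [div_mul_div_comm, div_le_div_iff₀ (by positivity) (by positivity)]
    have : M ^ 2 ≤ k ^ 2 * v ^ 2 := by
      rw [← sq_abs v, ← mul_pow]; gcongr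
    nlinarith
  calc fejer T v ≤ _ := h1
    _ ≤ _ := h5
    _ ≤ _ := by gcongr

/-! ### Prime powers congruent to one -/

open ArithmeticFunction.vonMangoldt in
/-- The value that the smoothed sum `∑ a(n) n^{-σ} fejer T (y - log n)` takes for `σ > 1`, where
`a` is the von Mangoldt function restricted to the residue class `1` modulo `m`. In contrast to the
sum, it makes sense for `σ = 1`. -/
noncomputable def smoothed (m : ℕ) [NeZero m] (T σ y : ℝ) : ℝ :=
  (∫ t : ℝ, (tri T t : ℂ) * Complex.exp (Complex.I * ((t * y : ℝ))) *
    LFunctionResidueClassAux (1 : ZMod m) (σ + Complex.I * t)).re +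
  (m.totient : ℝ)⁻¹ * ∫ u in Set.Ioi (0 : ℝ), Real.exp (-(u * (σ - 1))) * fejer T (y - u)

/-- The contribution of the simple pole at `1` to the smoothed sum, from
`1 / (s - 1) = ∫ exp (-u (s - 1))` over `u > 0` and Fubini. -/
lemma pole_integral {T : ℝ} (hT : 0 < T) {σ : ℝ} (hσ : 1 < σ) (y : ℝ) :
    ∫ t : ℝ, (tri T t : ℂ) * Complex.exp (Complex.I * ((t * y : ℝ))) *
      (1 / ((σ : ℂ) + Complex.I * t - 1)) =
    ((∫ u in Set.Ioi (0 : ℝ), Real.exp (-(u * (σ - 1))) * fejer T (y - u) : ℝ) : ℂ) := by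
  set f : ℝ → ℝ → ℂ := fun t u => ((tri T t : ℂ) * ((Real.exp (-(u * (σ - 1))) : ℝ) : ℂ)) *
    Complex.exp (Complex.I * ((t * (y - u) : ℝ))) with hf
  have hexp : MeasureTheory.IntegrableOn (fun u : ℝ => Real.exp (-(u * (σ - 1)))) (Set.Ioi 0) := by
    have := exp_neg_integrableOn_Ioi 0 (sub_pos.mpr hσ)
    refine this.congr_fun (fun u _ => ?_) measurableSet_Ioi
    simp only; ring_nf
  have hint : MeasureTheory.Integrable (Function.uncurry f)
      (MeasureTheory.volume.prod (MeasureTheory.volume.restrict (Set.Ioi (0 : ℝ)))) := by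
    refine MeasureTheory.Integrable.mul_bdd (c := 1) ?_ ?_ ?_
    · exact (tri_integrable_ofReal hT).mul_prod
        (MeasureTheory.Integrable.ofReal (𝕜 := ℂ) hexp)
    · exact Continuous.aestronglyMeasurable (by fun_prop)
    · exact Filter.Eventually.of_forall fun p => (norm_exp_I_real _).le
  have hL : ∀ t : ℝ, (tri T t : ℂ) * Complex.exp (Complex.I * ((t * y : ℝ))) *
      (1 / ((σ : ℂ) + Complex.I * t - 1)) = ∫ u in Set.Ioi (0 : ℝ), f t u := by
    intro t
    have hre : (-((σ : ℂ) + Complex.I * t - 1)).re < 0 := by simp; linarith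
    have h1 := integral_exp_mul_complex_Ioi hre 0
    rw [Complex.ofReal_zero, mul_zero, Complex.exp_zero, neg_div_neg_eq] at h1
    rw [← h1, ← MeasureTheory.integral_const_mul]
    congr 1; ext u
    simp only [hf]
    push_cast
    rw [mul_assoc, mul_assoc, ← Complex.exp_add, ← Complex.exp_add]
    congr 2; ring
  simp_rw [hL]
  rw [MeasureTheory.integral_integral_swap hint, ← integral_complex_ofReal]
  congr 1; ext u
  simp only [hf]
  rw [Complex.ofReal_mul, ← integral_tri_exp hT, ← MeasureTheory.integral_const_mul]
  congr 1; ext t; ring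

open ArithmeticFunction.vonMangoldt in
lemma term_residueClass (m : ℕ) (σ t : ℝ) (n : ℕ) :
    LSeries.term (fun n => (residueClass (1 : ZMod m) n : ℂ)) (σ + Complex.I * t) n =
      ((residueClass (1 : ZMod m) n / (n : ℝ) ^ σ : ℝ) : ℂ) *
        Complex.exp (Complex.I * ((t * (-Real.log n) : ℝ))) := by
  rcases eq_or_ne n 0 with rfl | hn
  · simp [residueClass_apply_zero]
  · have hn' : (n : ℂ) ≠ 0 := Nat.cast_ne_zero.mpr hn
    rw [LSeries.term_of_ne_zero hn, Complex.cpow_add _ _ hn', Complex.ofReal_div,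
      Complex.ofReal_cpow (Nat.cast_nonneg n), Complex.ofReal_natCast, ← div_div, div_eq_mul_inv
      (_ / _) ((n : ℂ) ^ (Complex.I * t))]
    congr 1
    rw [Complex.cpow_def_of_ne_zero hn', ← Complex.exp_neg, ← Complex.natCast_log]
    congr 1; push_cast; ring

open ArithmeticFunction.vonMangoldt in
/-- The explicit form of the smoothed sum in the region of absolute convergence. -/
lemma hasSum_smoothed (m : ℕ) [NeZero m] {T : ℝ} (hT : 0 < T) {σ : ℝ} (hσ : 1 < σ) (y : ℝ) :
    HasSum (fun n : ℕ => residueClass (1 : ZMod m) n / (n : ℝ) ^ σ * fejer T (y - Real.log n))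
      (smoothed m T σ y) := by
  set b : ℕ → ℝ := fun n => residueClass (1 : ZMod m) n / (n : ℝ) ^ σ with hb
  have hb0 : ∀ n, 0 ≤ b n := fun n => div_nonneg (residueClass_nonneg _ _) (by positivity)
  have hbs : Summable b :=
    LSeries.summable_real_of_abscissaOfAbsConv_lt <|
        (abscissaOfAbsConv_residueClass_le_one (1 : ZMod m)).trans_lt <| mod_cast hσ
  set F : ℕ → ℝ → ℂ := fun n t => (tri T t : ℂ) * Complex.exp (Complex.I * ((t * y : ℝ))) *
    LSeries.term (fun n => (residueClass (1 : ZMod m) n : ℂ)) (σ + Complex.I * t) n with hF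
  have hF' : ∀ n t, F n t = b n * ((tri T t : ℂ) *
      Complex.exp (Complex.I * ((t * (y - Real.log n) : ℝ)))) := by
    intro n t
    simp only [hF, term_residueClass]
    have : Complex.exp (Complex.I * ((t * (y - Real.log n) : ℝ))) =
      Complex.exp (Complex.I * ((t * y : ℝ))) * Complex.exp (Complex.I * ((t * (-Real.log n) : ℝ))) := by
      rw [← Complex.exp_add]; congr 1; push_cast; ring
    rw [this]; ring
  have hFi : ∀ n, MeasureTheory.Integrable (F n) := by
    intro n
    rw [show F n = _ from funext (hF' n)]
    exact (tri_exp_integrable hT _).const_mul _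
  have hFn : ∀ n, ∫ t, ‖F n t‖ = b n * ∫ t, tri T t := by
    intro n
    rw [← MeasureTheory.integral_const_mul]
    congr 1; ext t
    rw [hF', norm_mul, norm_mul, norm_exp_I_real, mul_one, Complex.norm_real, Complex.norm_real,
      Real.norm_of_nonneg (hb0 n), Real.norm_of_nonneg (tri_nonneg _ _)]
  have hsum := MeasureTheory.hasSum_integral_of_summable_integral_norm hFi
    (by simp_rw [hFn]; exact hbs.mul_right _)
  have hval : ∀ n, ∫ t, F n t = ((b n * fejer T (y - Real.log n) : ℝ) : ℂ) := by
    intro n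
    rw [Complex.ofReal_mul, ← integral_tri_exp hT, ← MeasureTheory.integral_const_mul]
    congr 1; ext t; exact hF' n t
  have hs : ∀ t : ℝ, ∑' n, F n t = (tri T t : ℂ) * Complex.exp (Complex.I * ((t * y : ℝ))) *
      LFunctionResidueClassAux (1 : ZMod m) (σ + Complex.I * t) + (m.totient : ℂ)⁻¹ *
      ((tri T t : ℂ) * Complex.exp (Complex.I * ((t * y : ℝ))) *
      (1 / ((σ : ℂ) + Complex.I * t - 1))) := by
    intro t
    simp only [hF]
    rw [tsum_mul_left, eqOn_LFunctionResidueClassAux isUnit_one (by simpa using hσ)]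
    simp only [LSeries]
    ring
  have hi2 : MeasureTheory.Integrable (fun t : ℝ => (m.totient : ℂ)⁻¹ *
      ((tri T t : ℂ) * Complex.exp (Complex.I * ((t * y : ℝ))) *
      (1 / ((σ : ℂ) + Complex.I * t - 1)))) := by
    refine MeasureTheory.Integrable.const_mul ?_ _
    refine (tri_exp_integrable hT y).mul_bdd (c := 1 / (σ - 1)) ?_ ?_
    · refine Continuous.aestronglyMeasurable ?_
      refine continuous_const.div (by fun_prop) fun t h => ?_
      have := congrArg Complex.re h
      simp at this; linarith
    · refine Filter.Eventually.of_forall fun t => ?_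
      rw [norm_div, norm_one]
      have h0 : 0 < σ - 1 := sub_pos.mpr hσ
      gcongr
      have := Complex.re_le_norm ((σ : ℂ) + Complex.I * t - 1)
      simpa using this
  have hi1 : MeasureTheory.Integrable (fun t : ℝ =>
      (tri T t : ℂ) * Complex.exp (Complex.I * ((t * y : ℝ))) *
      LFunctionResidueClassAux (1 : ZMod m) (σ + Complex.I * t)) := by
    have hcont : Continuous (fun t : ℝ =>
      (tri T t : ℂ) * Complex.exp (Complex.I * ((t * y : ℝ))) *
      LFunctionResidueClassAux (1 : ZMod m) (σ + Complex.I * t)) := by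
      have h1 := tri_continuous T
      have h2 : Continuous fun t : ℝ => LFunctionResidueClassAux (1 : ZMod m) (σ + Complex.I * t) :=
        (continuousOn_LFunctionResidueClassAux (1 : ZMod m)).comp_continuous (by fun_prop)
          (fun t => by simpa using hσ.le)
      exact Continuous.mul (by fun_prop) h2
    apply hcont.integrable_of_hasCompactSupport
    refine HasCompactSupport.of_support_subset_isCompact (isCompact_Icc (a := -T) (b := T)) ?_
    intro t ht
    apply Set.Ioc_subset_Icc_self (tri_support hT _)
    intro h0
    exact ht (by simp [h0])
  simp_rw [hs, hval] at hsum
  rw [MeasureTheory.integral_add hi1 hi2, MeasureTheory.integral_const_mul,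
    pole_integral hT hσ] at hsum
  have hre := Complex.hasSum_re hsum
  convert! hre using 1
  simp only [smoothed, Complex.add_re]
  congr 1
  rw [← Complex.ofReal_natCast, ← Complex.ofReal_inv, ← Complex.ofReal_mul, Complex.ofReal_re]

open ArithmeticFunction.vonMangoldt in
lemma smoothed_tendsto_one (m : ℕ) [NeZero m] {T : ℝ} (hT : 0 < T) (y : ℝ) :
    Filter.Tendsto (fun σ => smoothed m T σ y) (nhdsWithin 1 (Set.Ioi 1))
      (nhds (smoothed m T 1 y)) := by
  refine Filter.Tendsto.add ?_ (Filter.Tendsto.const_mul _ ?_)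
  · refine (Complex.continuous_re.tendsto _).comp ?_
    have hint : ∀ σ : ℝ, ∫ t : ℝ, (tri T t : ℂ) * Complex.exp (Complex.I * ((t * y : ℝ))) *
        LFunctionResidueClassAux (1 : ZMod m) (σ + Complex.I * t) =
        ∫ t in (-T)..T, (tri T t : ℂ) * Complex.exp (Complex.I * ((t * y : ℝ))) *
        LFunctionResidueClassAux (1 : ZMod m) (σ + Complex.I * t) := by
      intro σ
      symm
      apply intervalIntegral.integral_eq_integral_of_support_subset
      intro t ht
      apply tri_support hT
      intro h0
      exact ht (by simp [h0])
    -- Clamping the real part at `1` makes the integrand continuous in both variables.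
    have hcont : Continuous fun σ : ℝ => ∫ t in (-T)..T,
        (tri T t : ℂ) * Complex.exp (Complex.I * ((t * y : ℝ))) *
        LFunctionResidueClassAux (1 : ZMod m) ((max σ 1 : ℝ) + Complex.I * t) := by
      apply intervalIntegral.continuous_parametric_intervalIntegral_of_continuous'
      have h1 := tri_continuous T
      have h2 : Continuous fun p : ℝ × ℝ =>
          LFunctionResidueClassAux (1 : ZMod m) ((max p.1 1 : ℝ) + Complex.I * p.2) :=
        (continuousOn_LFunctionResidueClassAux (1 : ZMod m)).comp_continuous (by fun_prop)
          (fun t => by simp)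
      exact Continuous.mul (by fun_prop) h2
    have h1 := (hcont.tendsto 1).mono_left (nhdsWithin_le_nhds (s := Set.Ioi 1))
    simp only [max_self] at h1
    rw [hint]
    refine h1.congr' ?_
    filter_upwards [self_mem_nhdsWithin] with σ hσ
    rw [hint, max_eq_left (le_of_lt hσ)]
  · have hf : MeasureTheory.Integrable (fun u => fejer T (y - u)) :=
      (fejer_integrable hT).comp_sub_left y
    refine MeasureTheory.tendsto_integral_filter_of_dominated_convergence
      (fun u => fejer T (y - u)) ?_ ?_ hf.integrableOn ?_
    · refine Filter.Eventually.of_forall fun σ => Continuous.aestronglyMeasurable ?_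
      have := fejer_continuous hT
      fun_prop
    · filter_upwards [self_mem_nhdsWithin] with σ hσ
      refine (MeasureTheory.ae_restrict_iff' measurableSet_Ioi).mpr
        (Filter.Eventually.of_forall fun u hu => ?_)
      rw [norm_mul, Real.norm_of_nonneg (fejer_nonneg hT _), Real.norm_of_nonneg (Real.exp_pos _).le]
      refine mul_le_of_le_one_left (fejer_nonneg hT _) (Real.exp_le_one_iff.mpr ?_)
      have : 0 < u * (σ - 1) := mul_pos hu (sub_pos.mpr hσ)
      linarith
    · refine Filter.Eventually.of_forall fun u => ?_
      refine Filter.Tendsto.mono_left (Continuous.tendsto ?_ 1) nhdsWithin_le_nhds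
      fun_prop

open ArithmeticFunction.vonMangoldt in
/-- The oscillating part vanishes by the Riemann–Lebesgue lemma, so only the pole contributes. -/
lemma smoothed_tendsto_atTop (m : ℕ) [NeZero m] {T : ℝ} (hT : 0 < T) :
    Filter.Tendsto (fun y => smoothed m T 1 y) Filter.atTop
      (nhds ((m.totient : ℝ)⁻¹ * ∫ v, fejer 1 v)) := by
  rw [← zero_add ((m.totient : ℝ)⁻¹ * _), ← integral_fejer hT]
  refine Filter.Tendsto.add ?_ (Filter.Tendsto.const_mul _ ?_)
  · have hRL := Real.tendsto_integral_exp_smul_cocompact (fun t : ℝ => (tri T t : ℂ) *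
      LFunctionResidueClassAux (1 : ZMod m) ((1 : ℝ) + Complex.I * t))
    have hw : Filter.Tendsto (fun y : ℝ => (-(2 * Real.pi)⁻¹) * y) Filter.atTop
        (Filter.cocompact ℝ) := by
      refine Filter.Tendsto.mono_right ?_ atBot_le_cocompact
      exact Filter.Tendsto.const_mul_atTop_of_neg (by simp [Real.pi_pos]) Filter.tendsto_id
    have h := (Complex.continuous_re.tendsto _).comp (hRL.comp hw)
    rw [Complex.zero_re] at h
    refine h.congr fun y => ?_
    simp only [Function.comp]
    congr 2; ext t
    rw [Circle.smul_def, Real.fourierChar_apply, smul_eq_mul]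
    have : Complex.exp (((2 * Real.pi * -(t * (-(2 * Real.pi)⁻¹ * y)) : ℝ) : ℂ) * Complex.I)
      = Complex.exp (Complex.I * ((t * y : ℝ))) := by
      rw [mul_comm]
      congr 3
      have := Real.pi_pos
      field_simp
    rw [this]; ring
  · have h1 : ∀ y : ℝ, ∫ u in Set.Ioi (0 : ℝ), Real.exp (-(u * (1 - 1))) * fejer T (y - u)
        = ∫ v in Set.Iio y, fejer T v := by
      intro y
      rw [← MeasureTheory.integral_indicator measurableSet_Ioi,
        ← MeasureTheory.integral_indicator measurableSet_Iio,
        ← MeasureTheory.integral_sub_left_eq_self _ _ y]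
      congr 1; ext u
      by_cases hu : u < y
      · rw [Set.indicator_of_mem (by simpa using hu), Set.indicator_of_mem (by exact hu)]
        simp
      · rw [Set.indicator_of_notMem (by simpa using hu), Set.indicator_of_notMem (by exact hu)]
    simp_rw [h1]
    exact (MeasureTheory.aecover_Iio Filter.tendsto_id).integral_tendsto_of_countably_generated
      (fejer_integrable hT)

open ArithmeticFunction.vonMangoldt in
/-- Prime powers congruent to `1` modulo `m` are asymptotically dense on the logarithmic scale. If
there were arbitrarily far gaps of half-width `δ`, then by `fejer_compare` the smoothed sum for a
large parameter `T` would, at their centres, be a small multiple of smoothed sums for the parameter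
`2`; but all of these have the same positive limit. -/
theorem exists_primePow_near (m : ℕ) [NeZero m] {δ : ℝ} (hδ : 0 < δ) :
    ∀ᶠ y : ℝ in Filter.atTop, ∃ n : ℕ, IsPrimePow n ∧ (n : ZMod m) = 1 ∧ |y - Real.log n| < δ := by
  by_contra hcon
  rw [Filter.not_eventually] at hcon
  obtain ⟨C, hC, hcmp⟩ := fejer_compare hδ
  set L := (m.totient : ℝ)⁻¹ * ∫ v, fejer 1 v with hL
  have hLpos : 0 < L :=
    mul_pos (inv_pos.mpr (mod_cast Nat.totient_pos.mpr (NeZero.pos m))) integral_fejer_pos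
  have key : ∀ T > 0, L ≤ C / T * (L + L) := by
    intro T hT
    have hlim2 : Filter.Tendsto (fun y => C / T * (smoothed m 2 1 y +
        smoothed m 2 1 (y + Real.pi / 2))) Filter.atTop (nhds (C / T * (L + L))) := by
      refine Filter.Tendsto.const_mul _ (Filter.Tendsto.add (smoothed_tendsto_atTop m two_pos) ?_)
      exact (smoothed_tendsto_atTop m two_pos).comp (Filter.tendsto_atTop_add_const_right _ _
        Filter.tendsto_id)
    refine le_of_tendsto_of_tendsto_of_frequently (smoothed_tendsto_atTop m hT) hlim2
      (hcon.mono fun y hy => ?_)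
    push Not at hy
    have hl1 := smoothed_tendsto_one m hT y
    have hl2 := ((smoothed_tendsto_one m two_pos y).add
      (smoothed_tendsto_one m two_pos (y + Real.pi / 2))).const_mul (C / T)
    refine le_of_tendsto_of_tendsto hl1 hl2 ?_
    filter_upwards [self_mem_nhdsWithin] with σ hσ
    refine hasSum_le (fun n => ?_) (hasSum_smoothed m hT hσ y)
      (((hasSum_smoothed m two_pos hσ y).add
        (hasSum_smoothed m two_pos hσ (y + Real.pi / 2))).mul_left (C / T))
    by_cases hn : IsPrimePow n ∧ (n : ZMod m) = 1
    · have h1 := hcmp T hT _ (hy n hn.1 hn.2)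
      have h2 : 0 ≤ residueClass (1 : ZMod m) n / (n : ℝ) ^ σ :=
        div_nonneg (residueClass_nonneg _ _) (by positivity)
      have h3 := mul_le_mul_of_nonneg_left h1 h2
      rw [show y + Real.pi / 2 - Real.log n = y - Real.log n + Real.pi / 2 by ring]
      linarith
    · have h0 : residueClass (1 : ZMod m) n = 0 := by
        by_cases h1 : (n : ZMod m) = 1
        · have h2 : ¬ IsPrimePow n := fun h => hn ⟨h, h1⟩
          simp [residueClass, Set.indicator, ArithmeticFunction.vonMangoldt_eq_zero_iff, h2]
        · exact Set.indicator_of_notMem (s := {n : ℕ | (n : ZMod m) = 1}) h1 _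
      simp [h0]
  have h := key (4 * C) (by positivity)
  have : C / (4 * C) * (L + L) = L / 2 := by field_simp; norm_num
  linarith

/-! ### Counting copies of the complete bipartite graph -/

section Counting

variable {V : Type*} [Fintype V]

open Classical in
/-- The common neighbours of `u` and `v`, as a finset. -/
noncomputable def cn (G : SimpleGraph V) (u v : V) : Finset V := {w | G.Adj u w ∧ G.Adj v w}

open Classical in
/-- The neighbours of `u`, as a finset. -/
noncomputable def nb (G : SimpleGraph V) (u : V) : Finset V := {w | G.Adj u w}

lemma mem_cn {G : SimpleGraph V} {u v w : V} : w ∈ cn G u v ↔ G.Adj u w ∧ G.Adj v w := by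
  simp [cn]

lemma mem_nb {G : SimpleGraph V} {u w : V} : w ∈ nb G u ↔ G.Adj u w := by
  simp [nb]

lemma cn_comm (G : SimpleGraph V) (u v : V) : cn G u v = cn G v u := by
  ext w; simp [mem_cn, and_comm]

omit [Fintype V] in
lemma disjoint_of_adj {G : SimpleGraph V} {S T : Finset V}
    (h : ∀ s ∈ S, ∀ w ∈ T, G.Adj s w) : Disjoint S T :=
  Finset.disjoint_left.mpr fun x hS hT => (h x hS x hT).ne rfl

/-- The complete bipartite subgraph of `G` between `S` and `T` (only edges of `G` are kept). -/
def bipSub (G : SimpleGraph V) (S T : Finset V) : G.Subgraph where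
  verts := {x | x ∈ S ∨ x ∈ T}
  Adj a b := G.Adj a b ∧ ((a ∈ S ∧ b ∈ T) ∨ (a ∈ T ∧ b ∈ S))
  adj_sub h := h.1
  edge_vert h := by rcases h.2 with h | h; exacts [Or.inl h.1, Or.inr h.1]
  symm := ⟨fun a b h => ⟨h.1.symm, by tauto⟩⟩

omit [Fintype V] in
lemma bipSub_iso (G : SimpleGraph V) (t : ℕ) (S T : Finset V) (hS : #S = 2) (hT : #T = t)
    (h : ∀ s ∈ S, ∀ w ∈ T, G.Adj s w) :
    Nonempty ((bipSub G S T).coe ≃g completeBipartiteGraph (Fin 2) (Fin t)) := by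
  have hd := Finset.disjoint_left.mp (disjoint_of_adj h)
  let eS : Fin 2 ≃ S := (S.equivFinOfCardEq hS).symm
  let eT : Fin t ≃ T := (T.equivFinOfCardEq hT).symm
  let f : Fin 2 ⊕ Fin t → (bipSub G S T).verts :=
    Sum.elim (fun i => ⟨eS i, Or.inl (eS i).2⟩) (fun i => ⟨eT i, Or.inr (eT i).2⟩)
  have hf : Function.Bijective f := by
    constructor
    · rintro (i | i) (j | j) hij
      · simpa [f, Subtype.ext_iff] using hij
      · have : (eS i : V) = eT j := by simpa [f, Subtype.ext_iff] using hij
        exact (hd (eS i).2 (this ▸ (eT j).2)).elim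
      · have : (eT i : V) = eS j := by simpa [f, Subtype.ext_iff] using hij
        exact (hd (eS j).2 (this ▸ (eT i).2)).elim
      · simpa [f, Subtype.ext_iff] using hij
    · rintro ⟨x, hx | hx⟩
      · exact ⟨Sum.inl (eS.symm ⟨x, hx⟩), by simp [f]⟩
      · exact ⟨Sum.inr (eT.symm ⟨x, hx⟩), by simp [f]⟩
  refine ⟨RelIso.symm ⟨Equiv.ofBijective f hf, ?_⟩⟩
  have hS' := fun i => (eS i).2
  have hT' := fun i => (eT i).2
  have hS'' : ∀ i, (eS i : V) ∉ T := fun i => hd (hS' i)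
  have hT'' : ∀ i, (eT i : V) ∉ S := fun i h => hd h (hT' i)
  rintro (i | i) (j | j)
  · change (bipSub G S T).Adj (eS i) (eS j) ↔ _
    simp [bipSub, hS'']
  · change (bipSub G S T).Adj (eS i) (eT j) ↔ _
    simpa [bipSub, hS''] using h _ (hS' i) _ (hT' j)
  · change (bipSub G S T).Adj (eT i) (eS j) ↔ _
    simpa [bipSub, hT''] using (h _ (hS' j) _ (hT' i)).symm
  · change (bipSub G S T).Adj (eT i) (eT j) ↔ _
    simp [bipSub, hT'']

omit [Fintype V] in
lemma exists_bipSub (G : SimpleGraph V) (t : ℕ) (G' : G.Subgraph)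
    (e : G'.coe ≃g completeBipartiteGraph (Fin 2) (Fin t)) :
    ∃ S T : Finset V, #S = 2 ∧ #T = t ∧ (∀ s ∈ S, ∀ w ∈ T, G.Adj s w) ∧ bipSub G S T = G' := by
  classical
  let fS : Fin 2 → V := fun i => (e.symm (Sum.inl i)).1
  let fT : Fin t → V := fun i => (e.symm (Sum.inr i)).1
  have hadj : ∀ a b, G'.Adj (e.symm a).1 (e.symm b).1 ↔
      (completeBipartiteGraph (Fin 2) (Fin t)).Adj a b := fun a b => e.symm.map_adj_iff
  have hiS : Function.Injective fS := fun i j h => by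
    simpa using e.symm.injective (Subtype.ext h)
  have hiT : Function.Injective fT := fun i j h => by
    simpa using e.symm.injective (Subtype.ext h)
  have hST : ∀ i j, fS i ≠ fT j := fun i j h => by
    simpa using e.symm.injective (Subtype.ext h)
  have hA : ∀ i j, G'.Adj (fS i) (fT j) := fun i j => (hadj _ _).mpr (by simp)
  refine ⟨univ.image fS, univ.image fT, by simp [card_image_of_injective _ hiS],
    by simp [card_image_of_injective _ hiT], ?_, ?_⟩
  · simp only [mem_image, mem_univ, true_and]
    rintro _ ⟨i, rfl⟩ _ ⟨j, rfl⟩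
    exact (hA i j).adj_sub
  · have hv : ∀ x, x ∈ G'.verts → ∃ a, (e.symm a).1 = x :=
      fun x hx => ⟨e ⟨x, hx⟩, by simp⟩
    apply SimpleGraph.Subgraph.ext
    · ext x
      simp only [bipSub, mem_image, mem_univ, true_and, Set.mem_ofPred_eq]
      constructor
      · rintro (⟨i, rfl⟩ | ⟨i, rfl⟩)
        · exact (e.symm (Sum.inl i)).2
        · exact (e.symm (Sum.inr i)).2
      · intro hx
        obtain ⟨a | a, rfl⟩ := hv x hx
        · exact Or.inl ⟨a, rfl⟩
        · exact Or.inr ⟨a, rfl⟩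
    · ext a b
      simp only [bipSub, mem_image, mem_univ, true_and]
      constructor
      · rintro ⟨_, ⟨⟨i, rfl⟩, ⟨j, rfl⟩⟩ | ⟨⟨i, rfl⟩, ⟨j, rfl⟩⟩⟩
        · exact hA i j
        · exact (hA j i).symm
      · intro hab
        refine ⟨hab.adj_sub, ?_⟩
        obtain ⟨a, rfl⟩ := hv a hab.fst_mem
        obtain ⟨b, rfl⟩ := hv b hab.snd_mem
        rw [hadj] at hab
        rcases a with a | a <;> rcases b with b | b
        · simp at hab
        · exact Or.inl ⟨⟨a, rfl⟩, ⟨b, rfl⟩⟩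
        · exact Or.inr ⟨⟨a, rfl⟩, ⟨b, rfl⟩⟩
        · simp at hab

omit [Fintype V] in
lemma bipSub_neighbor_left {G : SimpleGraph V} {S T : Finset V}
    (h : ∀ s ∈ S, ∀ w ∈ T, G.Adj s w) {x : V} (hx : x ∈ S) :
    (bipSub G S T).neighborSet x = T := by
  have hd := Finset.disjoint_left.mp (disjoint_of_adj h) hx
  ext y
  simp only [bipSub, Subgraph.mem_neighborSet, mem_coe]
  constructor
  · rintro ⟨_, h | h⟩
    exacts [h.2, (hd h.1).elim]
  · exact fun hy => ⟨h x hx y hy, Or.inl ⟨hx, hy⟩⟩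

omit [Fintype V] in
lemma bipSub_neighbor_right {G : SimpleGraph V} {S T : Finset V}
    (h : ∀ s ∈ S, ∀ w ∈ T, G.Adj s w) {x : V} (hx : x ∈ T) :
    (bipSub G S T).neighborSet x = S := by
  have hd := fun hS => Finset.disjoint_left.mp (disjoint_of_adj h) hS hx
  ext y
  simp only [bipSub, Subgraph.mem_neighborSet, mem_coe]
  constructor
  · rintro ⟨_, h | h⟩
    exacts [(hd h.1).elim, h.2]
  · exact fun hy => ⟨(h y hy x hx).symm, Or.inr ⟨hx, hy⟩⟩

omit [Fintype V] in
/-- A copy of `K_{2,t}` with `t ≥ 3` determines its two sides: the vertices of the small side are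
those of degree `t`. -/
lemma bipSub_inj {G : SimpleGraph V} {t : ℕ} (ht : 3 ≤ t) {S T S' T' : Finset V}
    (hS : #S = 2) (hT : #T = t) (hS' : #S' = 2)
    (h : ∀ s ∈ S, ∀ w ∈ T, G.Adj s w) (h' : ∀ s ∈ S', ∀ w ∈ T', G.Adj s w)
    (heq : bipSub G S T = bipSub G S' T') : S = S' ∧ T = T' := by
  have hsub : S ⊆ S' := by
    intro x hx
    have hm : x ∈ (bipSub G S' T').verts := heq ▸ Or.inl hx
    rcases hm with hm | hm
    · exact hm
    · have h1 := bipSub_neighbor_left h hx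
      rw [heq, bipSub_neighbor_right h' hm, Finset.coe_inj] at h1
      rw [h1] at hS'
      omega
  have hSS : S = S' := Finset.eq_of_subset_of_card_le hsub (by omega)
  refine ⟨hSS, ?_⟩
  obtain ⟨x, hx⟩ : S.Nonempty := Finset.card_pos.mp (by omega)
  have h1 := bipSub_neighbor_left h hx
  rw [heq, bipSub_neighbor_left h' (hSS ▸ hx), Finset.coe_inj] at h1
  exact h1.symm

open Classical in
/-- A copy of `K_{2,t}` is a 2-set `S` together with `t` of the vertices joined to all of `S`. -/
lemma copyCount_eq_sum (G : SimpleGraph V) {t : ℕ} (ht : 3 ≤ t) :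
    _root_.copyCount (completeBipartiteGraph (Fin 2) (Fin t)) G =
      ∑ S ∈ powersetCard 2 (univ : Finset V), (#{w | ∀ s ∈ S, G.Adj s w}).choose t := by
  set P : Finset (Σ _ : Finset V, Finset V) := (powersetCard 2 (univ : Finset V)).sigma
    (fun S => powersetCard t {w | ∀ s ∈ S, G.Adj s w}) with hP
  have hmem : ∀ x : Σ _ : Finset V, Finset V, x ∈ P ↔
      #x.1 = 2 ∧ #x.2 = t ∧ ∀ s ∈ x.1, ∀ w ∈ x.2, G.Adj s w := by
    rintro ⟨S, T⟩
    simp only [hP, Finset.mem_sigma, mem_powersetCard, true_and, subset_iff, mem_filter,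
      mem_univ]
    constructor
    · rintro ⟨⟨_, a⟩, b, c⟩
      exact ⟨a, c, fun s hs w hw => b hw s hs⟩
    · rintro ⟨a, b, c⟩
      exact ⟨⟨fun _ _ => trivial, a⟩, fun w hw s hs => c s hs w hw, b⟩
  have hcard : #P = ∑ S ∈ powersetCard 2 (univ : Finset V),
      (#{w | ∀ s ∈ S, G.Adj s w}).choose t := by
    rw [hP, card_sigma]
    exact sum_congr rfl fun S _ => card_powersetCard _ _
  rw [← hcard, _root_.copyCount, ← Fintype.card_coe, ← Nat.card_eq_fintype_card]
  let φ : P → {G' : G.Subgraph // Nonempty (G'.coe ≃g completeBipartiteGraph (Fin 2) (Fin t))} :=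
    fun x => ⟨bipSub G x.1.1 x.1.2, bipSub_iso G t _ _ ((hmem _).mp x.2).1 ((hmem _).mp x.2).2.1
      ((hmem _).mp x.2).2.2⟩
  symm
  refine Nat.card_eq_of_bijective φ ⟨?_, ?_⟩
  · rintro ⟨⟨S, T⟩, hx⟩ ⟨⟨S', T'⟩, hx'⟩ heq
    have h1 := (hmem _).mp hx
    have h2 := (hmem _).mp hx'
    obtain ⟨rfl, rfl⟩ := bipSub_inj ht h1.1 h1.2.1 h2.1 h1.2.2 h2.2.2 (Subtype.ext_iff.mp heq)
    rfl
  · rintro ⟨G', ⟨e⟩⟩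
    obtain ⟨S, T, hS, hT, h, hG⟩ := exists_bipSub G t G' e
    exact ⟨⟨⟨S, T⟩, (hmem _).mpr ⟨hS, hT, h⟩⟩, Subtype.ext hG⟩

open Classical in
lemma two_mul_sum_powersetCard (f : Finset V → ℕ) :
    2 * ∑ S ∈ powersetCard 2 (univ : Finset V), f S =
      ∑ x ∈ (univ : Finset V).offDiag, f {x.1, x.2} := by
  have hmaps : ∀ x ∈ (univ : Finset V).offDiag,
      ({x.1, x.2} : Finset V) ∈ powersetCard 2 (univ : Finset V) := by
    intro x hx
    simp only [mem_offDiag, mem_univ, true_and] at hx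
    simp [mem_powersetCard, card_pair hx]
  rw [← sum_fiberwise_of_maps_to hmaps, mul_sum]
  refine sum_congr rfl fun S hS => ?_
  rw [mem_powersetCard] at hS
  obtain ⟨a, b, hab, rfl⟩ := card_eq_two.mp hS.2
  have : ({x ∈ (univ : Finset V).offDiag | ({x.1, x.2} : Finset V) = {a, b}} : Finset (V × V)) =
      {(a, b), (b, a)} := by
    ext ⟨x, y⟩
    simp only [mem_filter, mem_offDiag, mem_univ, true_and, mem_insert, mem_singleton,
      Prod.mk.injEq]
    constructor
    · rintro ⟨hxy, h⟩
      have hx : x ∈ ({a, b} : Finset V) := h ▸ mem_insert_self _ _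
      have hy : y ∈ ({a, b} : Finset V) := h ▸ mem_insert_of_mem (mem_singleton_self _)
      simp only [mem_insert, mem_singleton] at hx hy
      grind
    · rintro (⟨rfl, rfl⟩ | ⟨rfl, rfl⟩)
      · exact ⟨hab, rfl⟩
      · exact ⟨hab.symm, pair_comm _ _⟩
  rw [this, sum_pair (by simp [hab]), pair_comm b a, two_mul]

open Classical in
/-- Counting copies of `K_{2,t}` by the ordered pair forming the small side. -/
lemma two_mul_copyCount (G : SimpleGraph V) {t : ℕ} (ht : 3 ≤ t) :
    2 * _root_.copyCount (completeBipartiteGraph (Fin 2) (Fin t)) G =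
      ∑ x ∈ (univ : Finset V).offDiag, (#(cn G x.1 x.2)).choose t := by
  rw [copyCount_eq_sum G ht, two_mul_sum_powersetCard]
  refine sum_congr rfl fun x _ => ?_
  congr 2
  ext w
  simp [mem_cn]

end Counting

/-! ### The upper bound -/

section Upper

variable {V : Type*} [Fintype V]

omit [Fintype V] in
lemma containsCopy_of_finsets {G : SimpleGraph V} {p q r : ℕ} {u v : V} (huv : u ≠ v)
    {R P Q : Finset V} (hR : #R = r) (hP : #P = p) (hQ : #Q = q)
    (hRu : ∀ x ∈ R, G.Adj u x) (hRv : ∀ x ∈ R, G.Adj v x) (hPu : ∀ x ∈ P, G.Adj u x)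
    (hQv : ∀ x ∈ Q, G.Adj v x) (hvP : v ∉ P) (huQ : u ∉ Q)
    (hRP : Disjoint R P) (hRQ : Disjoint R Q) (hPQ : Disjoint P Q) :
    ContainsCopy (K2rpq p q r) G := by
  let eR : Fin r ≃ R := (R.equivFinOfCardEq hR).symm
  let eP : Fin p ≃ P := (P.equivFinOfCardEq hP).symm
  let eQ : Fin q ≃ Q := (Q.equivFinOfCardEq hQ).symm
  have kR : ∀ i, (eR i : V) ∈ R := fun i => (eR i).2
  have kP : ∀ i, (eP i : V) ∈ P := fun i => (eP i).2
  have kQ : ∀ i, (eQ i : V) ∈ Q := fun i => (eQ i).2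
  have iR : Function.Injective fun i => (eR i : V) := Subtype.val_injective.comp eR.injective
  have iP : Function.Injective fun i => (eP i : V) := Subtype.val_injective.comp eP.injective
  have iQ : Function.Injective fun i => (eQ i : V) := Subtype.val_injective.comp eQ.injective
  have huR : u ∉ R := fun h => (hRu u h).ne rfl
  have hvR : v ∉ R := fun h => (hRv v h).ne rfl
  have huP : u ∉ P := fun h => (hPu u h).ne rfl
  have hvQ : v ∉ Q := fun h => (hQv v h).ne rfl
  rw [Finset.disjoint_left] at hRP hRQ hPQ
  let f : Fin 2 ⊕ (Fin r ⊕ Fin p ⊕ Fin q) → V :=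
    Sum.elim ![u, v] (Sum.elim (fun i => eR i) (Sum.elim (fun i => eP i) (fun i => eQ i)))
  have hrel : ∀ a b, K2rpqRel p q r a b → G.Adj (f a) (f b) := by
    rintro (i | i | i | i) (j | j | j | j) h <;> simp only [K2rpqRel] at h
    · fin_cases i
      exacts [hRu _ (kR j), hRv _ (kR j)]
    · subst h; exact hPu _ (kP j)
    · subst h; exact hQv _ (kQ j)
  refine ⟨f, ?_, ?_⟩
  · have h2 : Function.Injective (![u, v] : Fin 2 → V) := by
      intro i j h
      fin_cases i <;> fin_cases j <;> simp_all
    refine h2.sumElim (iR.sumElim (iP.sumElim iQ ?_) ?_) ?_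
    · intro i j h
      exact hPQ (kP i) (h ▸ kQ j)
    · rintro i (j | j) h
      · exact hRP (kR i) (h ▸ kP j)
      · exact hRQ (kR i) (h ▸ kQ j)
    · rintro i (j | j | j) h <;> fin_cases i <;> simp at h
      · exact huR (h ▸ kR j)
      · exact hvR (h ▸ kR j)
      · exact huP (h ▸ kP j)
      · exact hvP (h ▸ kP j)
      · exact huQ (h ▸ kQ j)
      · exact hvQ (h ▸ kQ j)
  · intro a b hab
    rw [K2rpq, SimpleGraph.fromRel_adj] at hab
    rcases hab.2 with h | h
    · exact hrel _ _ h
    · exact (hrel _ _ h).symm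

lemma containsCopy_of_degree {G : SimpleGraph V} {p q r : ℕ} {u v : V} (huv : u ≠ v)
    (hc : r ≤ #(cn G u v)) (hu : r + p + q + 1 ≤ #(nb G u)) (hv : r + p + q + 1 ≤ #(nb G v)) :
    ContainsCopy (K2rpq p q r) G := by
  classical
  obtain ⟨R, hR, hRc⟩ := exists_subset_card_eq hc
  have h1 : p ≤ #(nb G u \ (R ∪ {v})) := by
    have := le_card_sdiff (R ∪ {v}) (nb G u)
    have := card_union_le R {v}
    have := card_singleton v
    omega
  obtain ⟨P, hP, hPc⟩ := exists_subset_card_eq h1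
  have h2 : q ≤ #(nb G v \ (R ∪ P ∪ {u})) := by
    have := le_card_sdiff (R ∪ P ∪ {u}) (nb G v)
    have := card_union_le (R ∪ P) {u}
    have := card_union_le R P
    have := card_singleton u
    omega
  obtain ⟨Q, hQ, hQc⟩ := exists_subset_card_eq h2
  simp only [subset_iff, mem_sdiff, mem_union, mem_singleton, mem_nb, mem_cn, not_or] at hR hP hQ
  exact containsCopy_of_finsets huv hRc hPc hQc (fun x hx => (hR hx).1) (fun x hx => (hR hx).2)
    (fun x hx => (hP hx).1) (fun x hx => (hQ hx).1) (fun h => (hP h).2.2 rfl)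
    (fun h => (hQ h).2.2 rfl) (Finset.disjoint_right.mpr fun x hx => (hP hx).2.1)
    (Finset.disjoint_right.mpr fun x hx => (hQ hx).2.1.1)
    (Finset.disjoint_right.mpr fun x hx => (hQ hx).2.1.2)

lemma card_cn_le_left (G : SimpleGraph V) (u v : V) : #(cn G u v) ≤ #(nb G u) :=
  card_le_card fun _ hx => mem_nb.mpr (mem_cn.mp hx).1

lemma card_cn_le_right (G : SimpleGraph V) (u v : V) : #(cn G u v) ≤ #(nb G v) :=
  card_le_card fun _ hx => mem_nb.mpr (mem_cn.mp hx).2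

lemma card_cn_lt {G : SimpleGraph V} {p q r : ℕ} (hG : IsFFree (K2rpq p q r) G) {u v : V}
    (huv : u ≠ v) : #(cn G u v) < r + p + q + 1 := by
  by_contra! h
  exact hG (containsCopy_of_degree huv (by omega) (h.trans (card_cn_le_left G u v))
    (h.trans (card_cn_le_right G u v)))

open Classical in
/-- A vertex of bounded degree has boundedly many partners with which it shares two neighbours:
each such partner lies in the common neighbourhood of two neighbours of the vertex. -/
lemma card_partners_le {G : SimpleGraph V} {p q r : ℕ} (hG : IsFFree (K2rpq p q r) G) (u : V)
    (hu : #(nb G u) < r + p + q + 1) :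
    #{v | 2 ≤ #(cn G u v)} ≤ (r + p + q + 1) ^ 3 := by
  set D := r + p + q + 1 with hD
  calc #{v | 2 ≤ #(cn G u v)} ≤ #((nb G u).offDiag.biUnion fun x => cn G x.1 x.2) := by
        refine card_le_card fun v hv => ?_
        rw [mem_filter] at hv
        obtain ⟨w, hw, w', hw', hne⟩ := one_lt_card.mp (show 1 < #(cn G u v) by omega)
        rw [mem_cn] at hw hw'
        simp only [mem_biUnion, mem_offDiag, mem_nb, mem_cn]
        exact ⟨(w, w'), ⟨hw.1, hw'.1, hne⟩, hw.2.symm, hw'.2.symm⟩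
    _ ≤ #(nb G u).offDiag * D := by
        refine card_biUnion_le_card_mul _ _ _ fun x hx => ?_
        exact (card_cn_lt hG (mem_offDiag.mp hx).2.2).le
    _ ≤ (D * D) * D := by
        refine Nat.mul_le_mul_right _ ?_
        rw [offDiag_card]
        have : #(nb G u) * #(nb G u) ≤ D * D := Nat.mul_le_mul hu.le hu.le
        omega
    _ = D ^ 3 := by ring

/-- In a `K_{2,r}^{p,q}`-free graph all but linearly many pairs have fewer than `r` common
neighbours, and the exceptional pairs have boundedly many. -/
lemma sum_choose_le {G : SimpleGraph V} {p q r t : ℕ} (hr : 2 ≤ r)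
    (hG : IsFFree (K2rpq p q r) G) :
    ∑ x ∈ (univ : Finset V).offDiag, (#(cn G x.1 x.2)).choose t ≤
      Fintype.card V * (Fintype.card V - 1) * (r - 1).choose t +
        Fintype.card V * (2 * (r + p + q + 1) ^ 3 * (r + p + q + 1).choose t) := by
  classical
  set D := r + p + q + 1 with hD
  set n := Fintype.card V with hn
  set A : Finset (Σ _ : V, V) := ({u | #(nb G u) < D} : Finset V).sigma
    (fun u => {v | 2 ≤ #(cn G u v)}) with hA
  have hAc : #A ≤ n * D ^ 3 := by
    rw [hA, card_sigma]
    calc _ ≤ ∑ u ∈ ({u | #(nb G u) < D} : Finset V), D ^ 3 :=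
          sum_le_sum fun u hu => card_partners_le hG u (mem_filter.mp hu).2
      _ ≤ n * D ^ 3 := by
          rw [sum_const, smul_eq_mul]
          exact Nat.mul_le_mul_right _ (card_le_univ _)
  set B : Finset (V × V) := {x ∈ (univ : Finset V).offDiag | r ≤ #(cn G x.1 x.2)} with hB
  have hBsub : B ⊆ A.image (fun x => (x.1, x.2)) ∪ A.image (fun x => (x.2, x.1)) := by
    rintro ⟨u, v⟩ hx
    simp only [hB, mem_filter, mem_offDiag, mem_univ, true_and] at hx
    have h : #(nb G u) < D ∨ #(nb G v) < D := by
      by_contra! h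
      exact hG (containsCopy_of_degree hx.1 hx.2 h.1 h.2)
    simp only [mem_union, mem_image, hA, Finset.mem_sigma, mem_filter, mem_univ, true_and]
    rcases h with h | h
    · exact Or.inl ⟨⟨u, v⟩, ⟨h, hr.trans hx.2⟩, rfl⟩
    · exact Or.inr ⟨⟨v, u⟩, ⟨h, by rw [cn_comm]; exact hr.trans hx.2⟩, rfl⟩
  have hBc : #B ≤ n * (2 * D ^ 3) := by
    have h1 := (card_le_card hBsub).trans (card_union_le _ _)
    have h2 := card_image_le (s := A) (f := fun x => (x.1, x.2))
    have h3 := card_image_le (s := A) (f := fun x => (x.2, x.1))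
    nlinarith
  calc ∑ x ∈ (univ : Finset V).offDiag, (#(cn G x.1 x.2)).choose t
      ≤ ∑ x ∈ (univ : Finset V).offDiag, ((r - 1).choose t +
          if r ≤ #(cn G x.1 x.2) then D.choose t else 0) := by
        refine sum_le_sum fun x hx => ?_
        split_ifs with h
        · exact le_add_left (Nat.choose_le_choose t (card_cn_lt hG (mem_offDiag.mp hx).2.2).le)
        · exact Nat.choose_le_choose t (by omega)
    _ = n * (n - 1) * (r - 1).choose t + #B * D.choose t := by
        rw [sum_add_distrib, sum_const, ← sum_filter, sum_const, smul_eq_mul, smul_eq_mul,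
          offDiag_card, card_univ, Nat.mul_sub_one]
    _ ≤ _ := by
        rw [← mul_assoc]
        gcongr

end Upper

/-- The upper bound on the extremal number, doubled to avoid halves. -/
lemma two_mul_exNum_le {t p q r : ℕ} (ht : 3 ≤ t) (hr : t < r) (n : ℕ) :
    2 * exNum n (completeBipartiteGraph (Fin 2) (Fin t)) (K2rpq p q r) ≤
      n * (n - 1) * (r - 1).choose t +
        n * (2 * (r + p + q + 1) ^ 3 * (r + p + q + 1).choose t) := by
  have h : exNum n (completeBipartiteGraph (Fin 2) (Fin t)) (K2rpq p q r) ≤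
      (n * (n - 1) * (r - 1).choose t +
        n * (2 * (r + p + q + 1) ^ 3 * (r + p + q + 1).choose t)) / 2 := by
    refine csSup_le' ?_
    rintro k ⟨G, hG, rfl⟩
    rw [Nat.le_div_iff_mul_le two_pos, mul_comm, two_mul_copyCount G ht]
    simpa using sum_choose_le (t := t) (by omega : 2 ≤ r) hG
  omega

/-- A graph all of whose pairs have fewer than `r` common neighbours bounds the extremal number
from below. -/
lemma le_two_mul_exNum {t p q r : ℕ} (ht : 3 ≤ t) {n : ℕ} (G : SimpleGraph (Fin n))
    (hG : ∀ u v, u ≠ v → #(cn G u v) < r) :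
    ∑ x ∈ (univ : Finset (Fin n)).offDiag, (#(cn G x.1 x.2)).choose t ≤
      2 * exNum n (completeBipartiteGraph (Fin 2) (Fin t)) (K2rpq p q r) := by
  rw [← two_mul_copyCount G ht]
  refine Nat.mul_le_mul_left _ (le_csSup ?_ ⟨G, ?_, rfl⟩)
  · refine ((Set.finite_univ (α := SimpleGraph (Fin n))).image
      (fun G => _root_.copyCount (completeBipartiteGraph (Fin 2) (Fin t)) G)).bddAbove.mono ?_
    rintro k ⟨G, _, rfl⟩
    exact ⟨G, Set.mem_univ _, rfl⟩
  · rintro ⟨f, hf, hadj⟩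
    have hne : f (Sum.inl 0) ≠ f (Sum.inl 1) := fun h => by simpa using hf h
    have hsub : univ.image (fun i : Fin r => f (Sum.inr (Sum.inl i))) ⊆
        cn G (f (Sum.inl 0)) (f (Sum.inl 1)) := by
      intro x hx
      obtain ⟨i, _, rfl⟩ := mem_image.mp hx
      rw [mem_cn]
      constructor <;> refine hadj ?_ <;> simp [K2rpq, K2rpqRel]
    have hc := card_le_card hsub
    rw [card_image_of_injective _ (fun i j h => by simpa using hf h), card_univ,
      Fintype.card_fin] at hc
    exact absurd (hG _ _ hne) (by omega)

/-! ### Graphs from powers in finite fields -/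

section Construction

/-- The graph on `A × F`, where `A` is the group of nonzero `m`-th powers of the field `F`, in
which distinct `(a, b)` and `(x, y)` are adjacent when `(b + y) ^ m = a * x`. -/
def powGraph (F : Type*) [Field F] (m : ℕ) :
    SimpleGraph ((powMonoidHom m : Fˣ →* Fˣ).range × F) where
  Adj u v := u ≠ v ∧ (u.2 + v.2) ^ m = ((u.1 : Fˣ) : F) * ((v.1 : Fˣ) : F)
  symm := ⟨fun u v h => ⟨h.1.symm, by rw [add_comm, h.2, mul_comm]⟩⟩
  loopless := ⟨fun u h => h.1 rfl⟩

lemma powGraph_fst {F : Type*} [Field F] {m : ℕ} {u v w : (powMonoidHom m : Fˣ →* Fˣ).range × F}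
    (hv : (u.2 + v.2) ^ m = ((u.1 : Fˣ) : F) * ((v.1 : Fˣ) : F))
    (hw : (u.2 + w.2) ^ m = ((u.1 : Fˣ) : F) * ((w.1 : Fˣ) : F)) (h : v.2 = w.2) : v = w := by
  refine Prod.ext (Subtype.ext (Units.ext ?_)) h
  exact mul_left_cancel₀ (Units.ne_zero _) (hv.symm.trans (h ▸ hw))

variable {F : Type*} [Field F] [Fintype F] [DecidableEq F]

lemma card_roots {m : ℕ} (hm : m ∣ Fintype.card F - 1) (c : Fˣ)
    (hc : c ∈ (powMonoidHom m : Fˣ →* Fˣ).range) : #{z : Fˣ | z ^ m = c} = m := by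
  have h1 := MonoidHom.card_fiber_eq_of_mem_range (powMonoidHom m : Fˣ →* Fˣ)
    (x := c) (y := 1) hc ⟨1, by simp⟩
  have h2 := IsCyclic.card_powMonoidHom_ker Fˣ m
  rw [Nat.card_eq_fintype_card (α := Fˣ), Fintype.card_units, Nat.gcd_eq_right hm] at h2
  simp only [powMonoidHom_apply] at h1
  rw [h1]
  conv_rhs => rw [← h2]
  rw [← Nat.subtype_card _ (p := fun z => z ∈ (powMonoidHom m : Fˣ →* Fˣ).ker)
    fun z => by simp [MonoidHom.mem_ker]]

lemma card_powRange {m : ℕ} (hm : m ∣ Fintype.card F - 1) :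
    Fintype.card (powMonoidHom m : Fˣ →* Fˣ).range = (Fintype.card F - 1) / m := by
  rw [← Nat.card_eq_fintype_card, IsCyclic.card_powMonoidHom_range, Nat.card_eq_fintype_card,
    Fintype.card_units, Nat.gcd_eq_right hm]

variable {m : ℕ} (hm : m ∣ Fintype.card F - 1)
include hm

/-- The common neighbours of two vertices with distinct second coordinates `b ≠ b'` are
determined by the ratio `(b + y) / (b' + y)`, which is an `m`-th root of a fixed element. -/
lemma card_cn_powGraph_le {u v : (powMonoidHom m : Fˣ →* Fˣ).range × F} (huv : u ≠ v) :
    #(cn (powGraph F m) u v) ≤ m := by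
  have hm0 : m ≠ 0 := by
    rintro rfl
    have := Fintype.one_lt_card (α := F)
    rw [zero_dvd_iff] at hm
    omega
  by_cases hb : u.2 = v.2
  · have : cn (powGraph F m) u v = ∅ := by
      refine eq_empty_of_forall_notMem fun w hw => huv ?_
      obtain ⟨h1, h2⟩ := mem_cn.mp hw
      have h1 := h1.symm.2
      have h2 := h2.symm.2
      exact powGraph_fst h1 h2 hb
    simp [this]
  · have hroots := card_roots hm ((u.1 : Fˣ) * (v.1 : Fˣ)⁻¹)
      (mul_mem u.1.2 (inv_mem v.1.2))
    conv_rhs => rw [← hroots]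
    have hne : ∀ w ∈ cn (powGraph F m) u v, u.2 + w.2 ≠ 0 ∧ v.2 + w.2 ≠ 0 := by
      intro w hw
      obtain ⟨h1, h2⟩ := mem_cn.mp hw
      constructor <;> intro h
      · have := h1.2
        rw [h, zero_pow hm0] at this
        exact mul_ne_zero (Units.ne_zero _) (Units.ne_zero _) this.symm
      · have := h2.2
        rw [h, zero_pow hm0] at this
        exact mul_ne_zero (Units.ne_zero _) (Units.ne_zero _) this.symm
    refine (card_le_card_of_injOn (t := image (fun z : Fˣ => (z : F))
      {z : Fˣ | z ^ m = (u.1 : Fˣ) * (v.1 : Fˣ)⁻¹})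
      (fun w => (u.2 + w.2) / (v.2 + w.2)) ?_ ?_).trans card_image_le
    · intro w hw
      obtain ⟨h1, h2⟩ := mem_cn.mp hw
      obtain ⟨n1, n2⟩ := hne w hw
      simp only [coe_image, Set.mem_image, mem_coe, mem_filter, mem_univ, true_and]
      refine ⟨Units.mk0 _ (div_ne_zero n1 n2), Units.ext ?_, rfl⟩
      have e1 := h1.2
      have e2 := h2.2
      simp only [Units.val_pow_eq_pow_val, Units.val_mk0, Units.val_mul, Units.val_inv_eq_inv_val,
        div_pow, e1, e2]
      field_simp
    · intro w hw w' hw' h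
      obtain ⟨n1, n2⟩ := hne w hw
      obtain ⟨n1', n2'⟩ := hne w' hw'
      have h1 := (mem_cn.mp hw).1.2
      have h1' := (mem_cn.mp hw').1.2
      refine powGraph_fst h1 h1' ?_
      simp only at h
      rw [div_eq_div_iff n2 n2'] at h
      have : (u.2 - v.2) * (w.2 - w'.2) = 0 := by linear_combination -h
      rcases mul_eq_zero.mp this with h | h
      · exact absurd (sub_eq_zero.mp h) hb
      · exact sub_eq_zero.mp h

/-- Every `m`-th root of the relevant element comes from a common neighbour. -/
lemma le_card_cn_powGraph {u v : (powMonoidHom m : Fˣ →* Fˣ).range × F} (ha : u.1 ≠ v.1)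
    (hb : u.2 ≠ v.2) (hadj : ¬ (powGraph F m).Adj u v) : m ≤ #(cn (powGraph F m) u v) := by
  have huv : u ≠ v := fun h => hb (by rw [h])
  have hroots := card_roots hm ((u.1 : Fˣ) * (v.1 : Fˣ)⁻¹) (mul_mem u.1.2 (inv_mem v.1.2))
  conv_lhs => rw [← hroots]
  rw [← card_image_of_injective _ (Units.val_injective (α := F))]
  refine (card_le_card ?_).trans
    (card_image_le (s := cn (powGraph F m) u v) (f := fun w => (u.2 + w.2) / (v.2 + w.2)))
  intro z' hz'
  obtain ⟨z, hz, rfl⟩ := mem_image.mp hz'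
  replace hz : z ^ m = (u.1 : Fˣ) * (v.1 : Fˣ)⁻¹ := by simpa using hz
  have hz1 : (1 : F) - z ≠ 0 := by
    intro h
    have : z = 1 := Units.ext (by simpa using (sub_eq_zero.mp h).symm)
    rw [this, one_pow, eq_comm, mul_inv_eq_one] at hz
    exact ha (Subtype.ext hz)
  have hw0 : (v.2 - u.2) / (1 - z) ≠ 0 := div_ne_zero (sub_ne_zero.mpr (Ne.symm hb)) hz1
  set W : Fˣ := Units.mk0 _ hw0 with hW
  have hWv : (W : F) = (v.2 - u.2) / (1 - z) := rfl
  let w : (powMonoidHom m : Fˣ →* Fˣ).range × F :=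
    (u.1⁻¹ * ⟨(z * W) ^ m, ⟨z * W, rfl⟩⟩, W - v.2)
  have hvw : v.2 + w.2 = W := by simp [w]
  have huw : u.2 + w.2 = z * W := by
    simp only [w, hWv]
    field_simp
    ring
  have e1 : (u.2 + w.2) ^ m = ((u.1 : Fˣ) : F) * ((w.1 : Fˣ) : F) := by
    rw [huw]
    simp [w]
  have e2 : (v.2 + w.2) ^ m = ((v.1 : Fˣ) : F) * ((w.1 : Fˣ) : F) := by
    rw [hvw]
    have hz' : (z : F) ^ m = ((u.1 : Fˣ) : F) * ((v.1 : Fˣ) : F)⁻¹ := by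
      have := congrArg (Units.val) hz
      simpa using this
    have hu := Units.ne_zero (u.1 : Fˣ)
    have hv := Units.ne_zero (v.1 : Fˣ)
    simp only [w, mul_pow, Subgroup.coe_mul, Subgroup.coe_inv, Units.val_mul,
      Units.val_inv_eq_inv_val, Units.val_pow_eq_pow_val, hz']
    field_simp
  refine mem_image.mpr ⟨w, mem_cn.mpr ⟨⟨?_, e1⟩, ⟨?_, e2⟩⟩, ?_⟩
  · intro h
    rw [← h] at e2
    exact hadj (SimpleGraph.Adj.symm ⟨huv.symm, e2⟩)
  · intro h
    rw [← h] at e1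
    exact hadj ⟨huv, e1⟩
  · simp only [hvw, huw]
    field_simp

/-- All but a few ordered pairs attain the maximal number of common neighbours. -/
lemma le_sum_powGraph (t : ℕ) :
    Fintype.card ((powMonoidHom m : Fˣ →* Fˣ).range × F) *
      (Fintype.card ((powMonoidHom m : Fˣ →* Fˣ).range × F) - 3 * Fintype.card F) * m.choose t ≤
    ∑ x ∈ (univ : Finset ((powMonoidHom m : Fˣ →* Fˣ).range × F)).offDiag,
      (#(cn (powGraph F m) x.1 x.2)).choose t := by
  classical
  set V := (powMonoidHom m : Fˣ →* Fˣ).range × F with hV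
  set P : V → V → Prop := fun u v => u.1 ≠ v.1 ∧ u.2 ≠ v.2 ∧ ¬ (powGraph F m).Adj u v with hP
  have hbad : ∀ u : V, #{v | ¬ P u v} ≤ 3 * Fintype.card F := by
    intro u
    have hsub : ({v | ¬ P u v} : Finset V) ⊆
        (({v | v.1 = u.1} : Finset V) ∪ ({v | v.2 = u.2} : Finset V)) ∪
          nb (powGraph F m) u := by
      intro v hv
      simp only [hP, mem_filter, mem_univ, true_and, mem_union, mem_nb] at hv ⊢
      by_contra! h
      exact hv ⟨Ne.symm h.1.1, Ne.symm h.1.2, h.2⟩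
    have h1 : #({v | v.1 = u.1} : Finset V) ≤ Fintype.card F := by
      refine card_le_card_of_injOn (t := univ) Prod.snd (fun _ _ => mem_univ _) ?_
      intro v hv w hw h
      exact Prod.ext (((mem_filter.mp hv).2).trans ((mem_filter.mp hw).2).symm) h
    have h2 : #({v | v.2 = u.2} : Finset V) ≤ Fintype.card F := by
      refine card_le_card_of_injOn (t := univ) (fun v => ((v.1 : Fˣ) : F))
        (fun _ _ => mem_univ _) ?_
      intro v hv w hw h
      exact Prod.ext (Subtype.ext (Units.ext h))
        (((mem_filter.mp hv).2).trans ((mem_filter.mp hw).2).symm)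
    have h3 : #(nb (powGraph F m) u) ≤ Fintype.card F := by
      refine card_le_card_of_injOn (t := univ) Prod.snd (fun _ _ => mem_univ _) ?_
      intro v hv w hw h
      exact powGraph_fst (mem_nb.mp hv).2 (mem_nb.mp hw).2 h
    have := (card_le_card hsub).trans ((card_union_le _ _).trans
      (Nat.add_le_add_right (card_union_le _ _) _))
    omega
  have hgood : ∀ u : V, Fintype.card V - 3 * Fintype.card F ≤ #{v | P u v} := by
    intro u
    have h1 : #{v | P u v} + #{v | ¬ P u v} = Fintype.card V :=
      (card_filter_add_card_filter_not (s := (univ : Finset V)) (P u)).trans card_univ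
    have h2 := hbad u
    omega
  calc _ ≤ (∑ u : V, #{v | P u v}) * m.choose t := by
        refine Nat.mul_le_mul_right _ ?_
        rw [← card_univ, ← smul_eq_mul, ← sum_const]
        exact sum_le_sum fun u _ => hgood u
    _ = ∑ x ∈ ((univ : Finset (V × V)).filter fun x => P x.1 x.2), m.choose t := by
        rw [sum_const, smul_eq_mul]
        congr 1
        conv_rhs => rw [card_filter, Fintype.sum_prod_type]
        simp only [card_filter]
    _ ≤ ∑ x ∈ ((univ : Finset (V × V)).filter fun x => P x.1 x.2),
          (#(cn (powGraph F m) x.1 x.2)).choose t := by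
        refine sum_le_sum fun x hx => Nat.choose_le_choose t ?_
        obtain ⟨h1, h2, h3⟩ := (mem_filter.mp hx).2
        exact le_card_cn_powGraph hm h1 h2 h3
    _ ≤ _ := by
        refine sum_le_sum_of_subset fun x hx => ?_
        obtain ⟨h1, h2, h3⟩ := (mem_filter.mp hx).2
        simp only [mem_offDiag, mem_univ, true_and]
        exact fun h => h1 (by rw [h])

end Construction

/-- The lower bound on the extremal number given by a prime power `Q` with `m ∣ Q - 1`. -/
lemma le_two_mul_exNum_of_primePow {t p q m n Q : ℕ} (ht : 3 ≤ t) (hQ : IsPrimePow Q)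
    (hm : m ∣ Q - 1) (hn : Q * ((Q - 1) / m) ≤ n) :
    Q * ((Q - 1) / m) * (Q * ((Q - 1) / m) - 3 * Q) * m.choose t ≤
      2 * exNum n (completeBipartiteGraph (Fin 2) (Fin t)) (K2rpq p q (m + 1)) := by
  classical
  obtain ⟨hF⟩ : Nonempty (Field (Fin Q)) := by
    rw [Fintype.nonempty_field_iff, Fintype.card_fin]
    exact hQ
  have hm' : m ∣ Fintype.card (Fin Q) - 1 := by rwa [Fintype.card_fin]
  let V := (powMonoidHom m : (Fin Q)ˣ →* (Fin Q)ˣ).range × Fin Q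
  have hcard : Fintype.card V = Q * ((Q - 1) / m) := by
    rw [Fintype.card_prod, card_powRange hm', Fintype.card_fin, mul_comm]
  obtain ⟨e⟩ : Nonempty (V ↪ Fin n) := by
    rw [Function.Embedding.nonempty_iff_card_le, hcard, Fintype.card_fin]
    exact hn
  -- The remaining vertices are isolated.
  set G : SimpleGraph (Fin n) := (powGraph (Fin Q) m).map e with hG
  have hcn : ∀ u v, cn G (e u) (e v) = (cn (powGraph (Fin Q) m) u v).map e := by
    intro u v
    ext w
    simp only [mem_cn, mem_map, hG, SimpleGraph.map_adj]
    constructor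
    · rintro ⟨⟨a, b, h1, h2, rfl⟩, ⟨c, d, h3, h4, h5⟩⟩
      obtain rfl := e.injective h2
      obtain rfl := e.injective h4
      obtain rfl := e.injective h5
      exact ⟨_, ⟨h1, h3⟩, rfl⟩
    · rintro ⟨w, ⟨h1, h2⟩, rfl⟩
      exact ⟨⟨_, _, h1, rfl, rfl⟩, ⟨_, _, h2, rfl, rfl⟩⟩
  have hbound : ∀ u v, u ≠ v → #(cn G u v) < m + 1 := by
    intro u v huv
    by_cases h : (∃ a, e a = u) ∧ ∃ b, e b = v
    · obtain ⟨⟨a, rfl⟩, b, rfl⟩ := h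
      rw [hcn, card_map]
      exact Nat.lt_succ_of_le (card_cn_powGraph_le hm' fun h => huv (by rw [h]))
    · have : cn G u v = ∅ := by
        refine eq_empty_of_forall_notMem fun w hw => h ?_
        obtain ⟨⟨_, a, _, _, h2, _⟩, _, c, _, _, h4, _⟩ := mem_cn.mp hw
        exact ⟨⟨a, h2⟩, c, h4⟩
      simp [this]
  have h1 : Fintype.card V * (Fintype.card V - 3 * Fintype.card (Fin Q)) * m.choose t ≤
      ∑ x ∈ (univ : Finset V).offDiag, (#(cn (powGraph (Fin Q) m) x.1 x.2)).choose t :=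
    le_sum_powGraph hm' t
  rw [hcard, Fintype.card_fin] at h1
  refine h1.trans (le_trans ?_ (le_two_mul_exNum ht G hbound))
  calc _ = ∑ x ∈ (univ : Finset V).offDiag.map (e.prodMap e), (#(cn G x.1 x.2)).choose t := by
        rw [sum_map]
        simp [hcn]
    _ ≤ _ := by
        refine sum_le_sum_of_subset fun x hx => ?_
        obtain ⟨y, hy, rfl⟩ := mem_map.mp hx
        simpa using hy

/-! ### Asymptotics -/

/-- For every `c < 1` and large `n`, some prime power `Q ≡ 1 (mod m)` has
`c * m * n ≤ Q ^ 2 ≤ m * n`. -/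
lemma exists_primePow_sq_near {m : ℕ} (hm : 0 < m) {c : ℝ} (hc0 : 0 < c) (hc1 : c < 1) :
    ∀ᶠ n : ℕ in Filter.atTop, ∃ Q : ℕ, IsPrimePow Q ∧ m ∣ Q - 1 ∧ (Q : ℝ) ^ 2 ≤ m * n ∧
      c * (m * n) ≤ (Q : ℝ) ^ 2 := by
  have : NeZero m := ⟨hm.ne'⟩
  have hδ : 0 < -Real.log c / 4 := by
    have := Real.log_neg hc0 hc1
    linarith
  have hm' : (0 : ℝ) < m := by exact_mod_cast hm
  have hlim : Filter.Tendsto (fun n : ℕ => Real.log (m * n) / 2 - -Real.log c / 4)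
      Filter.atTop Filter.atTop := by
    refine Filter.tendsto_atTop_add_const_right _ _ ?_
    refine Filter.Tendsto.atTop_div_const two_pos ?_
    exact Real.tendsto_log_atTop.comp (tendsto_natCast_atTop_atTop.const_mul_atTop hm')
  filter_upwards [hlim.eventually (exists_primePow_near m hδ), Filter.eventually_gt_atTop 0]
    with n hn hn0
  obtain ⟨Q, hQ, hQ1, hQ2⟩ := hn
  have hn' : (0 : ℝ) < n := by exact_mod_cast hn0
  have hQpos : (0 : ℝ) < Q := by exact_mod_cast hQ.pos
  rw [abs_lt] at hQ2
  refine ⟨Q, hQ, ?_, ?_, ?_⟩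
  · rw [← ZMod.natCast_eq_zero_iff, Nat.cast_sub hQ.pos, hQ1]
    simp
  · rw [← Real.log_le_log_iff (by positivity) (by positivity), Real.log_pow]
    push_cast
    linarith [hQ2.1]
  · rw [← Real.log_le_log_iff (by positivity) (by positivity), Real.log_pow,
      Real.log_mul hc0.ne' (by positivity)]
    push_cast
    linarith [hQ2.2]

/-- The asymptotic lower bound on the extremal number. -/
lemma eventually_le_two_mul_exNum {t p q m : ℕ} (ht : 3 ≤ t) (hm : 0 < m) {c : ℝ} (hc0 : 0 < c)
    (hc1 : c < 1) :
    ∀ᶠ n : ℕ in Filter.atTop, (c * n) ^ 2 * (m.choose t : ℝ) ≤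
      2 * (exNum n (completeBipartiteGraph (Fin 2) (Fin t)) (K2rpq p q (m + 1)) : ℝ) := by
  have hm' : (1 : ℝ) ≤ m := by exact_mod_cast hm
  have hlim : Filter.Tendsto (fun n : ℕ => (1 - c) ^ 2 * (n : ℝ)) Filter.atTop Filter.atTop :=
    tendsto_natCast_atTop_atTop.const_mul_atTop (by nlinarith)
  filter_upwards [exists_primePow_sq_near hm (c := (1 + c) / 2) (by linarith) (by linarith),
    hlim.eventually_ge_atTop (64 * m)] with n hn hn2
  obtain ⟨Q, hQ, hdvd, hle, hge⟩ := hn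
  obtain ⟨k, hk⟩ := hdvd
  have hkQ : (Q - 1) / m = k := by rw [hk, Nat.mul_div_cancel_left _ hm]
  have hQ1 : (Q : ℝ) = m * k + 1 := by
    have := hQ.pos
    exact_mod_cast (by omega : Q = m * k + 1)
  have hn0 : (0 : ℝ) ≤ n := Nat.cast_nonneg n
  have hQ0 : (0 : ℝ) ≤ Q := Nat.cast_nonneg Q
  have hkn : (Q : ℝ) * k ≤ n := by
    have : (m : ℝ) * (Q * k) ≤ m * n := by nlinarith
    exact le_of_mul_le_mul_left this (by linarith)
  have hkn' : Q * ((Q - 1) / m) ≤ n := by rw [hkQ]; exact_mod_cast hkn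
  have key := le_two_mul_exNum_of_primePow (p := p) (q := q) ht hQ ⟨k, hk⟩ hkn'
  rw [hkQ] at key
  -- `Q` is of order `√n`, hence negligible against `n`.
  have hQn : 8 * (Q : ℝ) ≤ (1 - c) * n := by
    refine abs_le_of_sq_le_sq' ?_ (by nlinarith) |>.2
    nlinarith
  have hlow : c * n ≤ (Q : ℝ) * k - 3 * Q := by
    have h1 : (m : ℝ) * ((1 + c) / 2 * n) ≤ m * (Q * k + Q) := by nlinarith
    have h2 := le_of_mul_le_mul_left h1 (by linarith)
    linarith
  have h3 : 3 * Q ≤ Q * k := by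
    have : 0 ≤ c * n := by positivity
    exact_mod_cast (by linarith : 3 * (Q : ℝ) ≤ Q * k)
  have key' : ((Q : ℝ) * k) * (Q * k - 3 * Q) * (m.choose t : ℝ) ≤
      2 * (exNum n (completeBipartiteGraph (Fin 2) (Fin t)) (K2rpq p q (m + 1)) : ℝ) := by
    have := (Nat.cast_le (α := ℝ)).mpr key
    push_cast [Nat.cast_sub h3] at this
    exact this
  refine le_trans ?_ key'
  have hcn : 0 ≤ c * n := by positivity
  gcongr
  nlinarith

theorem stmt13 (t p q r : ℕ) (ht : 3 ≤ t) (hr : t < r) :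
    Filter.Tendsto (fun n : ℕ =>
        (exNum n (completeBipartiteGraph (Fin 2) (Fin t)) (K2rpq p q r) : ℝ) /
          ((Nat.choose n 2 : ℝ) * (Nat.choose (r - 1) t : ℝ)))
      Filter.atTop (nhds 1) := by
  have hC : (0 : ℝ) < (r - 1).choose t := by exact_mod_cast Nat.choose_pos (by omega)
  have hden : ∀ n : ℕ, 2 ≤ n → (0 : ℝ) < (n.choose 2 : ℝ) * ((r - 1).choose t : ℝ) :=
    fun n hn => mul_pos (by exact_mod_cast Nat.choose_pos hn) hC
  refine tendsto_order.mpr ⟨fun a ha => ?_, fun a ha => ?_⟩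
  · set b := max a 0 with hb
    have hb0 : 0 ≤ b := le_max_right _ _
    have hb1 : b < 1 := max_lt ha one_pos
    filter_upwards [eventually_le_two_mul_exNum (p := p) (q := q) (m := r - 1) ht (by omega)
      (c := (1 + b) / 2) (by linarith) (by linarith), Filter.eventually_ge_atTop 2] with n hn hn2
    rw [Nat.sub_add_cancel (by omega)] at hn
    refine (le_max_left a 0).trans_lt ?_
    rw [← hb, lt_div_iff₀ (hden n hn2), Nat.cast_choose_two]
    have hn' : (2 : ℝ) ≤ n := by exact_mod_cast hn2
    have h1 : b * (n * (n - 1)) < ((1 + b) / 2 * n) ^ 2 := by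
      have : b < ((1 + b) / 2) ^ 2 := by nlinarith
      have h1 := mul_lt_mul_of_pos_right this (by positivity : (0 : ℝ) < (n : ℝ) ^ 2)
      have h2 := mul_nonneg hb0 (by linarith : (0 : ℝ) ≤ n)
      rw [mul_pow]
      linarith
    have h2 := mul_lt_mul_of_pos_right h1 hC
    linarith
  · set K : ℝ := 2 * (r + p + q + 1) ^ 3 * ((r + p + q + 1).choose t : ℝ) with hK
    have hlim : Filter.Tendsto (fun n : ℕ => (a - 1) * ((r - 1).choose t : ℝ) * ((n : ℝ) - 1))
        Filter.atTop Filter.atTop :=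
      Filter.Tendsto.const_mul_atTop (mul_pos (by linarith) hC)
        (Filter.tendsto_atTop_add_const_right _ _ tendsto_natCast_atTop_atTop)
    filter_upwards [hlim.eventually_gt_atTop K, Filter.eventually_ge_atTop 2] with n hn hn2
    rw [div_lt_iff₀ (hden n hn2), Nat.cast_choose_two]
    have h := (Nat.cast_le (α := ℝ)).mpr (two_mul_exNum_le (p := p) (q := q) ht hr n)
    push_cast [Nat.cast_sub (by omega : 1 ≤ n)] at h
    have hn' : (2 : ℝ) ≤ n := by exact_mod_cast hn2
    have h2 := mul_lt_mul_of_pos_left hn (by linarith : (0 : ℝ) < n)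
    rw [hK] at h2
    linarith
end
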